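/- arXiv:2008.04458 — 4 statements merged into one kernel-verified Lean document; each statement's English description precedes it below -/
import Mathlib

section
/- Let (V_{g,n}) be a Mirzakhani family. Then for every (g,n) with 2g−2+n ≥ 2 and all complex numbers L_1,…,L_n the new recursion holds: [(L_1+2πi)·V_{g,n}(L_1+2πi,L_2,…,L_n) − (L_1−2πi)·V_{g,n}(L_1−2πi,L_2,…,L_n)]/(4πi) = ½ ∫₀^{L_1}∫₀^{L_1−y} V_{g−1,n+1}(x,y,L_2,…,L_n)·xy dx dy + ½ Σ ∫₀^{L_1}∫₀^{L_1−y} V_{g_1,|I|+1}(x,L_I)·V_{g_2,|J|+1}(y,L_J)·xy dx dy + ½ Σ_{j=2}^n (∫₀^{L_1+L_j} + ∫₀^{L_1−L_j}) V_{g,n−1}(x,L_2,…,L̂_j,…,L_n)·x dx, where the middle sum runs over ordered pairs (g_1,I),(g_2,J) with g_1+g_2 = g and I ⊔ J = {2,…,n}, and any term involving an index (g',n') with 2g'−2+n' ≤ 0 (in particular the first term when g = 0) is omitted. -/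
/-! Fix real `L_2, …, L_n` and regard both recursions as statements about functions of `L_1`.
Mirzakhani's recursion gives the derivative of `W(s) = s · V_{g,n}(s, L_2, …, L_n)` as a
combination of integrals of even polynomials against the kernel `H`, while the new recursion gives
the difference quotient `(W(z + 2πi) - W(z - 2πi)) / (4πi)`. The bridge is the moment formula

  `∫₀^∞ x^{2k+1} H(x, t) dx = w^{2k+2} / (2k+2) · B_{2k+2}(t/w + 1/2)`,  with `w = 4πi`

(`integral_odd_pow_mul_Hker`), where `B_n` is the Bernoulli polynomial. It is the derivative in `t`
of a multiple of `B_{2k+3}(t/w + 1/2)`, and `B_n(x + 1) - B_n(x) = n x^{n-1}` turns the difference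
quotient of this primitive into `z^{2k+2} / (2k+2) = ∫₀^z x^{2k+1} dx`. So, passing from the
derivative to the difference quotient replaces the kernel integral by an integral from `0` to `z`.
The relation is recorded by the predicate `Good`, which is linear and invariant under real
translations of `t` (needed for the arguments `L_1 ± L_j`).

The moment formula is obtained from the symmetry of the Fermi function, which shows that odd moments
of `H` are polynomials in `t` with coefficients given by moments of the Fermi function
(`integral_pow_mul_Hker`), and from the evaluation of the latter as alternating zeta values
(`fermiMoment_eq`). The double integrals against `H(x + y, t)` reduce to single moments by the
shear `u = x + y`; the resulting Beta constant also occurs in the iterated polynomial integrals on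
the other side (`integral_prod_Hker`, `pInt_pInt_pow`).

Since two polynomials with the same derivative have the same difference quotient, this proves the
new recursion for real `L_2, …, L_n` (`MirzFamily.starEq_cons`). Both of its sides are polynomial in `L`
(`PolyFn`), so it extends to all complex `L`.
-/

open scoped Real Topology
open MeasureTheory Filter

noncomputable section

/-- `StableIdx g n` means `2g - 2 + n > 0`, i.e. `(g,n)` is a stable index. -/
abbrev StableIdx (g n : ℕ) : Prop := 2 < 2 * g + n

/-- The integral `∫₀ᵃ f` of an entire (polynomial) integrand `f`: it equals `P a`, where `P`
is the antiderivative of `f` with `P 0 = 0`. -/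
def pInt (f : ℂ → ℂ) (a : ℂ) : ℂ := a * ∫ s in (0:ℝ)..(1:ℝ), f ((s : ℂ) * a)

/-- Insert `x` in front of the subtuple of `L` indexed by `I` (taken in increasing order). -/
def tupIns {β : Type*} {n : ℕ} (x : β) (L : Fin n → β) (I : Finset (Fin n)) :
    Fin (I.card + 1) → β :=
  Fin.cons x fun i => L ((I.orderIsoOfFin rfl) i).1

/-- Evaluation of a real multivariate polynomial at complex points. -/
def ev {n : ℕ} (p : MvPolynomial (Fin n) ℝ) (z : Fin n → ℂ) : ℂ :=
  MvPolynomial.eval₂ (algebraMap ℝ ℂ) z p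

/-- A real tuple regarded as a complex tuple. -/
def cplx {m : ℕ} (L : Fin m → ℝ) : Fin m → ℂ := fun i => (L i : ℂ)

/-- Right-hand side of the new recursion (★), with terms involving unstable indices omitted. -/
def newRHS (V : (g n : ℕ) → (Fin n → ℂ) → ℂ) (g m : ℕ) (L : Fin (m + 1) → ℂ) : ℂ :=
  (if 1 ≤ g ∧ StableIdx (g - 1) (m + 2) then
    (1 / 2 : ℂ) * pInt (fun y => pInt (fun x =>
      V (g - 1) (m + 2) (Fin.cons x (Fin.cons y (Fin.tail L))) * x * y) (L 0 - y)) (L 0)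
  else 0)
  + (1 / 2 : ℂ) * ∑ g₁ ∈ Finset.range (g + 1),
      ∑ I ∈ (Finset.univ : Finset (Fin m)).powerset,
      (if StableIdx g₁ (I.card + 1) ∧ StableIdx (g - g₁) (Iᶜ.card + 1) then
        pInt (fun y => pInt (fun x =>
          V g₁ (I.card + 1) (tupIns x (Fin.tail L) I) *
          V (g - g₁) (Iᶜ.card + 1) (tupIns y (Fin.tail L) Iᶜ) * x * y) (L 0 - y)) (L 0)
      else 0)
  + (1 / 2 : ℂ) * ∑ j : Fin m,
      (if StableIdx g (({j}ᶜ : Finset (Fin m)).card + 1) then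
        pInt (fun x => V g (({j}ᶜ : Finset (Fin m)).card + 1)
            (tupIns x (Fin.tail L) ({j}ᶜ : Finset (Fin m))) * x) (L 0 + L j.succ)
        + pInt (fun x => V g (({j}ᶜ : Finset (Fin m)).card + 1)
            (tupIns x (Fin.tail L) ({j}ᶜ : Finset (Fin m))) * x) (L 0 - L j.succ)
      else 0)

/-- The new recursion (★) at `(g, n) = (g, m+1)`. -/
def StarEq (V : (g n : ℕ) → (Fin n → ℂ) → ℂ) (g m : ℕ) (L : Fin (m + 1) → ℂ) : Prop :=
  ((L 0 + 2 * (π : ℂ) * Complex.I) *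
      V g (m + 1) (Fin.cons (L 0 + 2 * (π : ℂ) * Complex.I) (Fin.tail L)) -
    (L 0 - 2 * (π : ℂ) * Complex.I) *
      V g (m + 1) (Fin.cons (L 0 - 2 * (π : ℂ) * Complex.I) (Fin.tail L))) /
    (4 * (π : ℂ) * Complex.I) = newRHS V g m L

/-- The Mirzakhani kernel `H(x, L)`. -/
def Hker (x L : ℝ) : ℝ :=
  1 / (1 + Real.exp ((x + L) / 2)) + 1 / (1 + Real.exp ((x - L) / 2))

/-- Mirzakhani's recursion at `(g, n) = (g, m+1)`, for real boundary lengths,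
with terms involving unstable indices omitted. -/
def MirzEq (V : (g n : ℕ) → (Fin n → ℂ) → ℂ) (g m : ℕ) (L : Fin (m + 1) → ℝ) : Prop :=
  deriv (fun s : ℝ => (s : ℂ) * V g (m + 1) (Fin.cons (s : ℂ) (cplx (Fin.tail L)))) (L 0) =
    (if 1 ≤ g ∧ StableIdx (g - 1) (m + 2) then
      (1 / 2 : ℂ) * ∫ x in Set.Ioi (0 : ℝ), ∫ y in Set.Ioi (0 : ℝ),
        V (g - 1) (m + 2) (Fin.cons (x : ℂ) (Fin.cons (y : ℂ) (cplx (Fin.tail L)))) *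
          ((Hker (x + y) (L 0) : ℝ) : ℂ) * (x : ℂ) * (y : ℂ)
    else 0)
    + (1 / 2 : ℂ) * ∑ g₁ ∈ Finset.range (g + 1),
        ∑ I ∈ (Finset.univ : Finset (Fin m)).powerset,
        (if StableIdx g₁ (I.card + 1) ∧ StableIdx (g - g₁) (Iᶜ.card + 1) then
          ∫ x in Set.Ioi (0 : ℝ), ∫ y in Set.Ioi (0 : ℝ),
            V g₁ (I.card + 1) (tupIns (x : ℂ) (cplx (Fin.tail L)) I) *
            V (g - g₁) (Iᶜ.card + 1) (tupIns (y : ℂ) (cplx (Fin.tail L)) Iᶜ) *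
            ((Hker (x + y) (L 0) : ℝ) : ℂ) * (x : ℂ) * (y : ℂ)
        else 0)
    + (1 / 2 : ℂ) * ∑ j : Fin m,
        (if StableIdx g (({j}ᶜ : Finset (Fin m)).card + 1) then
          ∫ x in Set.Ioi (0 : ℝ),
            V g (({j}ᶜ : Finset (Fin m)).card + 1)
              (tupIns (x : ℂ) (cplx (Fin.tail L)) ({j}ᶜ : Finset (Fin m))) *
            ((Hker x (L 0 + L j.succ) + Hker x (L 0 - L j.succ) : ℝ) : ℂ) * (x : ℂ)
        else 0)

/-- A Mirzakhani family: real polynomials `V_{g,n}`, symmetric and even in each variable,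
with the correct initial values, satisfying Mirzakhani's recursion. -/
structure MirzFamily where
  V : (g n : ℕ) → MvPolynomial (Fin n) ℝ
  symm : ∀ g n, StableIdx g n → ∀ (σ : Equiv.Perm (Fin n)) (z : Fin n → ℂ),
    ev (V g n) (z ∘ σ) = ev (V g n) z
  even : ∀ g n, StableIdx g n → ∀ (i : Fin n) (z : Fin n → ℂ),
    ev (V g n) (Function.update z i (-(z i))) = ev (V g n) z
  v03 : ∀ z : Fin 3 → ℂ, ev (V 0 3) z = 1
  v11 : ∀ z : Fin 1 → ℂ, ev (V 1 1) z = (z 0 ^ 2 + 4 * (π : ℂ) ^ 2) / 48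
  recur : ∀ g m, 4 ≤ 2 * g + (m + 1) → ∀ L : Fin (m + 1) → ℝ,
    MirzEq (fun g' n' => ev (V g' n')) g m L

/-! ### Moments of the Fermi function and of the kernel -/

/-- The Fermi function `1 / (1 + e^{u/2})`, from which the Mirzakhani kernel is built:
`H(x, t) = fermi (x + t) + fermi (x - t)`. -/
def fermi (u : ℝ) : ℝ := 1 / (1 + Real.exp (u / 2))

lemma Hker_eq (x t : ℝ) : Hker x t = fermi (x + t) + fermi (x - t) := rfl

lemma continuous_fermi : Continuous fermi := by
  unfold fermi
  refine continuous_const.div (by fun_prop) fun x => by positivity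

lemma fermi_nonneg (u : ℝ) : 0 ≤ fermi u := by unfold fermi; positivity

lemma fermi_le (u : ℝ) : fermi u ≤ Real.exp (-(u / 2)) := by
  unfold fermi
  rw [Real.exp_neg, one_div]
  gcongr
  linarith

lemma fermi_neg (u : ℝ) : fermi (-u) = 1 - fermi u := by
  unfold fermi
  rw [neg_div, Real.exp_neg]
  have := Real.exp_pos (u / 2)
  field_simp
  ring

lemma integrableOn_pow_mul_exp (q : ℕ) (a : ℝ) :
    IntegrableOn (fun x : ℝ => x ^ q * Real.exp (-(x / 2))) (Set.Ioi a) := by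
  refine integrable_of_isBigO_exp_neg (b := 1 / 4) (by norm_num) (by fun_prop) ?_
  have h := (isLittleO_pow_exp_pos_mul_atTop q (b := 1 / 4) (by norm_num)).isBigO
  refine (h.mul (Asymptotics.isBigO_refl (fun x : ℝ => Real.exp (-(x / 2))) atTop)).congr_right ?_
  intro x
  rw [← Real.exp_add]
  ring_nf

lemma integrableOn_pow_mul_fermi (q : ℕ) (t a : ℝ) :
    IntegrableOn (fun x : ℝ => x ^ q * fermi (x + t)) (Set.Ioi a) := by
  refine ((integrableOn_pow_mul_exp q a).norm.const_mul (Real.exp (-(t / 2)))).mono' ?_ ?_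
  · have := continuous_fermi
    exact (by fun_prop : Continuous fun x : ℝ => x ^ q * fermi (x + t)).aestronglyMeasurable
  · refine Eventually.of_forall fun x => ?_
    rw [norm_mul, norm_mul, Real.norm_of_nonneg (fermi_nonneg _),
      Real.norm_of_nonneg (Real.exp_pos _).le]
    have h := fermi_le (x + t)
    rw [show -((x + t) / 2) = -(x / 2) + -(t / 2) by ring, Real.exp_add] at h
    calc _ ≤ ‖x ^ q‖ * (Real.exp (-(x / 2)) * Real.exp (-(t / 2))) := by gcongr
      _ = _ := by ring

lemma integrableOn_pow_mul_Hker (q : ℕ) (t : ℝ) :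
    IntegrableOn (fun x : ℝ => x ^ q * Hker x t) (Set.Ioi 0) := by
  simp only [Hker_eq, mul_add, sub_eq_add_neg]
  exact (integrableOn_pow_mul_fermi q t 0).add (integrableOn_pow_mul_fermi q (-t) 0)

/-- The moment `∫₀^∞ u^q / (1 + e^{u/2}) du` of the Fermi function. -/
def fermiMoment (q : ℕ) : ℝ := ∫ u in Set.Ioi (0 : ℝ), u ^ q * fermi u

/-- Substituting `u = x + t` and expanding `(u - t)^p` expresses the shifted moment through the
moments, up to an integral over the bounded interval between `0` and `t`. -/
lemma integral_pow_mul_fermi_shift (p : ℕ) (t : ℝ) :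
    ∫ x in Set.Ioi (0 : ℝ), x ^ p * fermi (x + t) =
      (∑ j ∈ Finset.range (p + 1), (p.choose j : ℝ) * fermiMoment (p - j) * (-t) ^ j)
        - ∫ u in (0 : ℝ)..t, (u - t) ^ p * fermi u := by
  have h1 : ∫ x in Set.Ioi (0 : ℝ), x ^ p * fermi (x + t) =
      ∫ u in Set.Ioi t, (u - t) ^ p * fermi u := by
    have h := (measurePreserving_add_right volume t).setIntegral_preimage_emb
      (measurableEmbedding_addRight t) (fun u : ℝ => (u - t) ^ p * fermi u) (Set.Ioi t)
    simpa using h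
  have hexp : ∀ u : ℝ, (u - t) ^ p * fermi u =
      ∑ j ∈ Finset.range (p + 1), ((p.choose j : ℝ) * (-t) ^ j) * (u ^ (p - j) * fermi u) := by
    intro u
    rw [sub_eq_add_neg, add_comm, add_pow, Finset.sum_mul]
    exact Finset.sum_congr rfl fun j _ => by ring
  have hint : ∀ j a, IntegrableOn (fun u : ℝ => ((p.choose j : ℝ) * (-t) ^ j) *
      (u ^ (p - j) * fermi u)) (Set.Ioi a) := fun j a => by
    simpa [IntegrableOn] using
      (integrableOn_pow_mul_fermi (p - j) 0 a).const_mul ((p.choose j : ℝ) * (-t) ^ j)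
  have hI : ∀ a, IntegrableOn (fun u : ℝ => (u - t) ^ p * fermi u) (Set.Ioi a) := fun a => by
    simp only [hexp]
    exact integrable_finsetSum _ fun j _ => hint j a
  have h2 := intervalIntegral.integral_Ioi_sub_Ioi' (hI 0) (hI t)
  have h3 : ∫ u in Set.Ioi (0 : ℝ), (u - t) ^ p * fermi u =
      ∑ j ∈ Finset.range (p + 1), (p.choose j : ℝ) * fermiMoment (p - j) * (-t) ^ j := by
    simp only [hexp]
    rw [integral_finsetSum _ fun j _ => hint j 0]
    refine Finset.sum_congr rfl fun j _ => ?_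
    rw [integral_const_mul, fermiMoment]
    ring
  rw [h1, ← h3, ← h2]
  ring

/-- For odd `p`, the moment of the kernel is a polynomial in `t`: the two integrals over bounded
intervals left over from the shifts by `t` and `-t` combine, thanks to
`fermi (-u) = 1 - fermi u`, into the integral of a polynomial. -/
lemma integral_pow_mul_Hker (p : ℕ) (hp : Odd p) (t : ℝ) :
    ∫ x in Set.Ioi (0 : ℝ), x ^ p * Hker x t = t ^ (p + 1) / (p + 1) +
      ∑ j ∈ Finset.range (p + 1), (p.choose j : ℝ) * fermiMoment (p - j) * (t ^ j + (-t) ^ j) := by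
  have h0 : ∫ x in Set.Ioi (0 : ℝ), x ^ p * Hker x t =
      (∫ x in Set.Ioi (0 : ℝ), x ^ p * fermi (x + t)) +
        ∫ x in Set.Ioi (0 : ℝ), x ^ p * fermi (x + -t) := by
    rw [← integral_add (integrableOn_pow_mul_fermi p t 0) (integrableOn_pow_mul_fermi p (-t) 0)]
    simp only [Hker_eq, mul_add, sub_eq_add_neg]
  have h1 : ∫ u in (0 : ℝ)..(-t), (u - -t) ^ p * fermi u =
      ∫ u in (0 : ℝ)..t, (u - t) ^ p * (1 - fermi u) := by
    have h := intervalIntegral.integral_comp_neg (a := 0) (b := t)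
      (fun u : ℝ => (u - -t) ^ p * fermi u)
    rw [neg_zero] at h
    rw [intervalIntegral.integral_symm, ← h, ← intervalIntegral.integral_neg]
    refine intervalIntegral.integral_congr fun u _ => ?_
    simp only [fermi_neg]
    rw [show -u - -t = -(u - t) by ring, hp.neg_pow]
    ring
  have hc := continuous_fermi
  have h2 : (∫ u in (0 : ℝ)..t, (u - t) ^ p * fermi u) +
      ∫ u in (0 : ℝ)..t, (u - t) ^ p * (1 - fermi u) = - (t ^ (p + 1) / (p + 1)) := by
    rw [← intervalIntegral.integral_add
      ((by fun_prop : Continuous fun u : ℝ => (u - t) ^ p * fermi u).intervalIntegrable _ _)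
      ((by fun_prop : Continuous fun u : ℝ => (u - t) ^ p * (1 - fermi u)).intervalIntegrable _ _)]
    have : ∀ u : ℝ, (u - t) ^ p * fermi u + (u - t) ^ p * (1 - fermi u) = (u - t) ^ p :=
      fun u => by ring
    simp only [this]
    rw [intervalIntegral.integral_comp_sub_right (fun u => u ^ p) t, integral_pow]
    rw [sub_self, zero_sub, (hp.add_one).neg_pow]
    simp
    ring
  rw [h0, integral_pow_mul_fermi_shift, integral_pow_mul_fermi_shift, h1, neg_neg]
  simp only [mul_add, Finset.sum_add_distrib]
  linarith

/-- Geometric expansion of the Fermi function as a series in powers of `e^{-t/2}`. -/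
lemma fermi_hasSum (t : ℝ) (ht : 0 < t) :
    HasSum (fun i : ℕ => ((-1 : ℂ) ^ i) * (Real.exp (-(((i : ℝ) + 1) / 2) * t) : ℝ))
      ((fermi t : ℝ) : ℂ) := by
  have hlt : Real.exp (-(t / 2)) < 1 := by
    rw [← Real.exp_zero]; exact Real.exp_lt_exp.mpr (by linarith)
  have hpos := Real.exp_pos (-(t / 2))
  have h := (hasSum_geometric_of_abs_lt_one (r := -Real.exp (-(t / 2)))
    (by rw [abs_neg, abs_of_pos hpos]; exact hlt)).mul_left (Real.exp (-(t / 2)))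
  have h' : HasSum (fun i : ℕ => ((-1 : ℝ) ^ i) * (Real.exp (-(((i : ℝ) + 1) / 2) * t)))
      (fermi t) := by
    convert! h using 1
    · ext i
      rw [neg_pow (Real.exp _), ← Real.exp_nat_mul, mul_left_comm, ← Real.exp_add]
      ring_nf
    · unfold fermi
      rw [sub_neg_eq_add, Real.exp_neg]
      have := Real.exp_pos (t / 2)
      field_simp
      ring
  exact_mod_cast Complex.hasSum_ofReal.mpr h'

/-- The odd moments are alternating zeta values at even integers, computed by integrating the
geometric expansion termwise (a Mellin transform); the Fourier series of the Bernoulli polynomial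
at `1 / 2` identifies them with `B_{2k+2}(1/2)`. -/
lemma fermiMoment_eq (k : ℕ) : ((fermiMoment (2 * k + 1) : ℝ) : ℂ) =
    (4 * π * Complex.I) ^ (2 * k + 2) / (2 * (2 * k + 2)) *
      ((Polynomial.bernoulli (2 * k + 2)).map (algebraMap ℚ ℂ)).eval (1 / 2) := by
  have hM := hasSum_mellin (a := fun i : ℕ => (-1 : ℂ) ^ i) (p := fun i => ((i : ℝ) + 1) / 2)
    (F := fun t => ((fermi t : ℝ) : ℂ)) (s := (2 * k + 2 : ℕ))
    (fun i => Or.inr (by positivity)) (by rw [Complex.natCast_re]; positivity)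
    (fun t ht => fermi_hasSum t ht) (by
      have := (summable_nat_add_iff 1).mpr (Real.summable_one_div_nat_pow.mpr
        (show 1 < 2 * k + 2 by lia))
      refine (this.mul_left (2 ^ (2 * k + 2))).congr fun i => ?_
      rw [Complex.natCast_re, Real.rpow_natCast]
      simp only [norm_pow, norm_neg, norm_one, one_pow, div_pow]
      push_cast
      field_simp)
  have hMel : mellin (fun t => ((fermi t : ℝ) : ℂ)) (2 * k + 2 : ℕ) =
      ((fermiMoment (2 * k + 1) : ℝ) : ℂ) := by
    rw [mellin, fermiMoment, ← integral_complex_ofReal]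
    refine setIntegral_congr_fun measurableSet_Ioi fun t ht => ?_
    have : (((2 * k + 2 : ℕ) : ℂ) - 1) = ((2 * k + 1 : ℕ) : ℂ) := by push_cast; ring
    simp only [this, Complex.cpow_natCast]
    simp
  rw [hMel] at hM
  -- the Fourier series `∑ cos (2πnx) / n^{2k+2}` at `x = 1/2`, where the cosine is `(-1)^n`
  have hZ := hasSum_one_div_nat_pow_mul_cos (k := k + 1) (by lia) (x := 1 / 2) (by norm_num)
  rw [← hasSum_nat_add_iff' 1] at hZ
  have hZ' := (Complex.hasSum_ofReal.mpr hZ).mul_left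
    (-((2 * k + 1).factorial * 2 ^ (2 * k + 2) : ℂ))
  refine (hM.unique (hZ'.congr_fun fun i => ?_)).trans ?_
  · have hc : Real.cos (2 * π * ((i + 1 : ℕ) : ℝ) * (1 / 2)) = (-1) ^ (i + 1) := by
      rw [← Real.cos_nat_mul_pi]; congr 1; ring
    rw [hc]
    have : ((2 * k + 2 : ℕ) : ℂ) = ((2 * k + 1 : ℕ) : ℂ) + 1 := by push_cast; ring
    rw [Complex.cpow_natCast, this, Complex.Gamma_nat_eq_factorial]
    push_cast
    rw [show 2 * (k + 1) = 2 * k + 2 by ring]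
    rw [div_pow]
    have : ((i : ℂ) + 1) ≠ 0 := by exact_mod_cast Nat.succ_ne_zero i
    field_simp
    ring
  · have hb : ((((Polynomial.bernoulli (2 * (k + 1))).map (algebraMap ℚ ℝ)).eval (1 / 2) : ℝ) : ℂ)
        = ((Polynomial.bernoulli (2 * k + 2)).map (algebraMap ℚ ℂ)).eval (1 / 2) := by
      rw [show 2 * (k + 1) = 2 * k + 2 by ring]
      simp only [Polynomial.eval_map_algebraMap]
      have := Polynomial.aeval_algebraMap_apply ℂ (1 / 2 : ℝ) (Polynomial.bernoulli (2 * k + 2))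
      simp at this ⊢
      exact this.symm
    push_cast
    rw [hb]
    have hf : (((2 * (k + 1)).factorial : ℕ) : ℂ) = (2 * k + 2) * ((2 * k + 1).factorial : ℂ) := by
      rw [show 2 * (k + 1) = (2 * k + 1) + 1 by ring, Nat.factorial_succ]
      push_cast; ring
    rw [hf]
    have h1 : ((2 * k + 1).factorial : ℂ) ≠ 0 := by exact_mod_cast Nat.factorial_ne_zero _
    have h2 : (2 * k + 2 : ℂ) ≠ 0 := by exact_mod_cast Nat.succ_ne_zero (2 * k + 1)
    have hI : Complex.I ^ (2 * k + 2) = (-1) ^ (k + 1) := by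
      rw [show 2 * k + 2 = 2 * (k + 1) by ring, pow_mul, Complex.I_sq]
    have h4 : (4 : ℂ) ^ (2 * k + 2) = 2 ^ (2 * k + 2) * 2 ^ (2 * k + 2) := by
      rw [← mul_pow]; norm_num
    simp [mul_pow, hI, h4]
    field_simp
    ring

/-! ### Bernoulli polynomials and the moment formula -/

/-- The Bernoulli polynomial `B_n` with complex coefficients. -/
def bernC (n : ℕ) : Polynomial ℂ := (Polynomial.bernoulli n).map (algebraMap ℚ ℂ)

lemma derivative_bernC (n : ℕ) :
    Polynomial.derivative (bernC n) = (n : Polynomial ℂ) * bernC (n - 1) := by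
  simp [bernC, Polynomial.derivative_map, Polynomial.derivative_bernoulli]

lemma bernC_eval_add_one (n : ℕ) (x : ℂ) :
    (bernC n).eval (x + 1) = (bernC n).eval x + n * x ^ (n - 1) := by
  have h := congrArg (fun q => (q.map (algebraMap ℚ ℂ)).eval x)
    (Polynomial.bernoulli_comp_one_add_X n)
  simpa [bernC, Polynomial.map_comp, Polynomial.eval_comp, add_comm] using h

/-- By the symmetry `B_n(1 - x) = (-1)^n B_n(x)`. -/
lemma bernC_eval_half_odd (n : ℕ) (hn : Odd n) : (bernC n).eval (1 / 2) = 0 := by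
  have h := congrArg (fun q => (q.map (algebraMap ℚ ℂ)).eval (1 / 2))
    (Polynomial.bernoulli_comp_one_sub_X n)
  simp only [hn.neg_one_pow, Polynomial.map_comp, Polynomial.eval_comp, Polynomial.map_sub,
    Polynomial.map_one, Polynomial.map_X, Polynomial.eval_sub, Polynomial.eval_one,
    Polynomial.eval_X, Polynomial.map_mul, Polynomial.map_neg, Polynomial.eval_mul,
    Polynomial.eval_neg] at h
  rw [show (1 : ℂ) - 1 / 2 = 1 / 2 by norm_num] at h
  change (bernC n).eval (1 / 2) = -1 * (bernC n).eval (1 / 2) at h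
  linear_combination h / 2

lemma hasseDeriv_bernC (j : ℕ) : ∀ n, j ≤ n →
    Polynomial.hasseDeriv j (bernC n) = (n.choose j : Polynomial ℂ) * bernC (n - j) := by
  have hit : ∀ n, j ≤ n → Polynomial.derivative^[j] (bernC n) =
      (n.descFactorial j : Polynomial ℂ) * bernC (n - j) := by
    induction j with
    | zero => intro n _; simp
    | succ j ih =>
      intro n hn
      rw [Function.iterate_succ_apply', ih n (by lia), Polynomial.derivative_natCast_mul,
        derivative_bernC, Nat.descFactorial_succ]
      push_cast
      rw [Nat.sub_sub]
      ring
  intro n hn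
  have h := congrFun (Polynomial.factorial_smul_hasseDeriv (R := ℂ) (k := j)) (bernC n)
  rw [hit n hn, Nat.descFactorial_eq_factorial_mul_choose] at h
  have hne : (j.factorial : Polynomial ℂ) ≠ 0 := by exact_mod_cast Nat.factorial_ne_zero j
  refine mul_left_cancel₀ hne ?_
  rw [LinearMap.smul_apply, nsmul_eq_mul] at h
  rw [h]
  push_cast
  ring

/-- Taylor expansion of the Bernoulli polynomial at `1 / 2`. -/
lemma bernC_eval_add_half (n : ℕ) (x : ℂ) :
    (bernC n).eval (x + 1 / 2) =
      ∑ j ∈ Finset.range (n + 1), (n.choose j : ℂ) * (bernC (n - j)).eval (1 / 2) * x ^ j := by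
  have hdeg : ((bernC n).taylor (1 / 2)).natDegree < n + 1 := by
    rw [Polynomial.natDegree_taylor]
    refine Nat.lt_succ_of_le (Polynomial.natDegree_map_le.trans ?_)
    rw [Polynomial.bernoulli_def]
    refine Polynomial.natDegree_sum_le_of_forall_le _ _ fun i hi => ?_
    exact (Polynomial.natDegree_monomial_le _).trans (by simpa [Nat.lt_succ_iff] using hi)
  rw [← Polynomial.taylor_eval, Polynomial.eval_eq_sum_range' hdeg]
  refine Finset.sum_congr rfl fun j hj => ?_
  rw [Polynomial.taylor_coeff, hasseDeriv_bernC j n (by simpa [Nat.lt_succ_iff] using hj)]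
  simp

/-- Closed form of the odd moments of the kernel,
`∫₀^∞ x^{2k+1} H(x, t) dx = w^{2k+2} / (2k+2) · B_{2k+2}(t/w + 1/2)` with `w = 4πi`. -/
lemma integral_odd_pow_mul_Hker (k : ℕ) (t : ℝ) :
    ((∫ x in Set.Ioi (0 : ℝ), x ^ (2 * k + 1) * Hker x t : ℝ) : ℂ) =
      (4 * π * Complex.I) ^ (2 * k + 2) / (2 * k + 2) *
        (bernC (2 * k + 2)).eval (t / (4 * π * Complex.I) + 1 / 2) := by
  have hw : (4 * π * Complex.I : ℂ) ≠ 0 := by simp [Real.pi_ne_zero]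
  have h2 : (2 * k + 2 : ℂ) ≠ 0 := by exact_mod_cast Nat.succ_ne_zero (2 * k + 1)
  have hB := bernC_eval_add_half (2 * k + 2) (t / (4 * π * Complex.I))
  rw [Finset.sum_range_succ] at hB
  rw [integral_pow_mul_Hker _ ⟨k, rfl⟩, hB, mul_add]
  push_cast
  refine (add_comm _ _).trans (congrArg₂ (· + ·) ?_ ?_)
  · rw [Finset.mul_sum]
    refine Finset.sum_congr rfl fun j hj => ?_
    have hj' : j ≤ 2 * k + 1 := by simpa [Nat.lt_succ_iff] using hj
    rcases Nat.even_or_odd j with he | ho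
    · obtain ⟨i, rfl⟩ := he
      have hsub : 2 * k + 1 - (i + i) = 2 * (k - i) + 1 := by lia
      have hsub2 : 2 * k + 2 - (i + i) = 2 * (k - i) + 2 := by lia
      have hpow : 2 * k + 2 = (2 * (k - i) + 2) + (i + i) := by lia
      have hch : (((2 * k + 2).choose (i + i) : ℕ) : ℂ) * (2 * ((k - i : ℕ) : ℂ) + 2) =
          (2 * k + 2) * (((2 * k + 1).choose (i + i) : ℕ) : ℂ) := by
        have := Nat.choose_mul_succ_eq (2 * k + 1) (i + i)
        rw [show 2 * k + 1 + 1 - (i + i) = 2 * (k - i) + 2 by lia] at this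
        have h' : (((2 * k + 1).choose (i + i) * (2 * k + 1 + 1) : ℕ) : ℂ) =
          ((2 * k + 1 + 1).choose (i + i) * (2 * (k - i) + 2) : ℕ) := by rw [this]
        push_cast at h'
        linear_combination -h'
      have h3 : (2 * ((k - i : ℕ) : ℂ) + 2) ≠ 0 := by
        exact_mod_cast Nat.succ_ne_zero (2 * (k - i) + 1)
      rw [hsub, hsub2, fermiMoment_eq, Even.neg_pow ⟨i, rfl⟩, div_pow]
      change _ * (_ * (bernC _).eval _) * _ = _
      have hwp : (4 * π * Complex.I : ℂ) ^ (2 * k + 2) =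
          (4 * π * Complex.I) ^ (2 * (k - i) + 2) * (4 * π * Complex.I) ^ (i + i) := by
        rw [← pow_add, ← hpow]
      rw [hwp]
      generalize (4 * π * Complex.I : ℂ) = w at hw ⊢
      generalize (bernC (2 * (k - i) + 2)).eval (1 / 2) = b
      generalize (((2 * k + 2).choose (i + i) : ℕ) : ℂ) = c at hch ⊢
      generalize (((2 * k + 1).choose (i + i) : ℕ) : ℂ) = d at hch ⊢
      have hd : d = c * (2 * ((k - i : ℕ) : ℂ) + 2) / (2 * k + 2) := by
        rw [hch]; field_simp
      have hwi := pow_ne_zero (i + i) hw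
      rw [hd]
      generalize w ^ (i + i) = u at hwi ⊢
      field_simp
      ring
    · rw [bernC_eval_half_odd _ (by grind), ho.neg_pow]
      ring
  · simp only [Nat.choose_self, Nat.sub_self]
    rw [show bernC 0 = 1 by simp [bernC], div_pow,
      show (2 * k + 1 + 1 : ℂ) = 2 * k + 2 by ring]
    have hwi := pow_ne_zero (2 * k + 2) hw
    generalize (4 * π * Complex.I : ℂ) ^ (2 * k + 2) = u at hwi ⊢
    simp only [Nat.cast_one, Polynomial.eval_one]
    field_simp

/-! ### From the derivative to the difference quotient -/

/-- `Good J R` says that `J`, a function of a real variable `t`, is the restriction of the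
derivative of a complex polynomial `G` whose symmetric difference quotient with step `2πi`,
`(G(z + 2πi) - G(z - 2πi)) / (4πi)`, is `R z`. This is the relation between the right-hand side of
Mirzakhani's recursion (as a function of `L₁ = t`) and that of the new recursion (at `L₁ = z`). -/
def Good (J : ℝ → ℂ) (R : ℂ → ℂ) : Prop :=
  ∃ G : Polynomial ℂ, (∀ t : ℝ, J t = G.derivative.eval (t : ℂ)) ∧
    ∀ z : ℂ, (G.eval (z + 2 * π * Complex.I) - G.eval (z - 2 * π * Complex.I)) /
      (4 * π * Complex.I) = R z

namespace Good

lemma zero : Good (fun _ => 0) (fun _ => 0) := ⟨0, by simp, by simp⟩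

lemma add {J J' : ℝ → ℂ} {R R' : ℂ → ℂ} (h : Good J R) (h' : Good J' R') :
    Good (fun t => J t + J' t) (fun z => R z + R' z) := by
  obtain ⟨G, h1, h2⟩ := h
  obtain ⟨G', h1', h2'⟩ := h'
  refine ⟨G + G', fun t => by simp [h1, h1'], fun z => ?_⟩
  beta_reduce
  rw [← h2, ← h2', Polynomial.eval_add, Polynomial.eval_add]
  ring

lemma const_mul {J : ℝ → ℂ} {R : ℂ → ℂ} (c : ℂ) (h : Good J R) :
    Good (fun t => c * J t) (fun z => c * R z) := by
  obtain ⟨G, h1, h2⟩ := h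
  refine ⟨Polynomial.C c * G, fun t => by simp [h1], fun z => ?_⟩
  beta_reduce
  rw [← h2]
  simp only [Polynomial.eval_mul, Polynomial.eval_C]
  ring

lemma sum {ι : Type*} (s : Finset ι) {J : ι → ℝ → ℂ} {R : ι → ℂ → ℂ}
    (h : ∀ i ∈ s, Good (J i) (R i)) :
    Good (fun t => ∑ i ∈ s, J i t) (fun z => ∑ i ∈ s, R i z) := by
  classical
  induction s using Finset.induction_on with
  | empty => simpa using zero
  | insert a s ha ih =>
    simp only [Finset.sum_insert ha]
    exact (h a (by simp)).add (ih fun i hi => h i (by simp [hi]))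

lemma ite {P : Prop} [Decidable P] {J : ℝ → ℂ} {R : ℂ → ℂ} (h : P → Good J R) :
    Good (fun t => if P then J t else 0) (fun z => if P then R z else 0) := by
  by_cases hP : P
  · simpa [hP] using h hP
  · simpa [hP] using zero

lemma shift {J : ℝ → ℂ} {R : ℂ → ℂ} (a : ℝ) (h : Good J R) :
    Good (fun t => J (t + a)) (fun z => R (z + a)) := by
  obtain ⟨G, h1, h2⟩ := h
  refine ⟨G.comp (Polynomial.X + Polynomial.C (a : ℂ)), fun t => ?_, fun z => ?_⟩
  · simp [h1, Polynomial.derivative_comp]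
  · beta_reduce
    rw [← h2]
    simp only [Polynomial.eval_comp, Polynomial.eval_add, Polynomial.eval_X, Polynomial.eval_C]
    rw [add_right_comm, show z - 2 * π * Complex.I + a = z + a - 2 * π * Complex.I by ring]

/-- The basic instance. Here `G` is a multiple of `B_{2k+3}(t/w + 1/2)` with `w = 4πi`, and shifting
`t` by `±2πi` shifts the argument of the Bernoulli polynomial by `±1/2`, so the difference quotient
is given by `B_n(x + 1) - B_n(x) = n x^{n-1}`. -/
lemma odd_pow (k : ℕ) :
    Good (fun t => ((∫ x in Set.Ioi (0 : ℝ), x ^ (2 * k + 1) * Hker x t : ℝ) : ℂ))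
    (fun z => z ^ (2 * k + 2) / (2 * k + 2)) := by
  have hw : (4 * π * Complex.I : ℂ) ≠ 0 := by simp [Real.pi_ne_zero]
  have h2 : (2 * k + 2 : ℂ) ≠ 0 := by exact_mod_cast Nat.succ_ne_zero (2 * k + 1)
  have h3 : (2 * k + 3 : ℂ) ≠ 0 := by exact_mod_cast Nat.succ_ne_zero (2 * k + 2)
  refine ⟨Polynomial.C ((4 * π * Complex.I) ^ (2 * k + 3) / ((2 * k + 3) * (2 * k + 2))) *
    (bernC (2 * k + 3)).comp (Polynomial.C (4 * π * Complex.I)⁻¹ * Polynomial.X +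
      Polynomial.C (1 / 2)), fun t => ?_, fun z => ?_⟩
  · beta_reduce
    rw [integral_odd_pow_mul_Hker]
    simp only [Polynomial.derivative_mul, Polynomial.derivative_C, Polynomial.derivative_comp,
      derivative_bernC, Polynomial.derivative_add, Polynomial.derivative_X, Polynomial.eval_mul,
      Polynomial.eval_add, Polynomial.eval_comp, Polynomial.eval_C, Polynomial.eval_X,
      Polynomial.eval_natCast, Polynomial.eval_one, Polynomial.eval_zero]
    rw [show 2 * k + 3 - 1 = 2 * k + 2 by lia, inv_mul_eq_div]
    push_cast
    rw [pow_succ _ (2 * k + 2)]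
    field_simp
    ring
  · simp only [Polynomial.eval_mul, Polynomial.eval_add, Polynomial.eval_comp, Polynomial.eval_C,
      Polynomial.eval_X]
    have e1 : (4 * π * Complex.I)⁻¹ * (z + 2 * π * Complex.I) + 1 / 2 =
        z / (4 * π * Complex.I) + 1 := by field_simp; ring
    have e2 : (4 * π * Complex.I)⁻¹ * (z - 2 * π * Complex.I) + 1 / 2 =
        z / (4 * π * Complex.I) := by field_simp; ring
    rw [e1, e2, bernC_eval_add_one, show 2 * k + 3 - 1 = 2 * k + 2 by lia, div_pow]
    rw [pow_succ _ (2 * k + 2)]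
    push_cast
    field_simp
    ring

end Good

/-! ### Double integrals against the kernel -/

lemma Hker_nonneg (x t : ℝ) : 0 ≤ Hker x t := add_nonneg (fermi_nonneg _) (fermi_nonneg _)

lemma Hker_le (x t : ℝ) :
    Hker x t ≤ (Real.exp (-(t / 2)) + Real.exp (t / 2)) * Real.exp (-(x / 2)) := by
  rw [Hker_eq]
  refine (add_le_add (fermi_le _) (fermi_le _)).trans_eq ?_
  rw [add_mul, ← Real.exp_add, ← Real.exp_add]
  ring_nf

lemma continuous_Hker (t : ℝ) : Continuous fun x => Hker x t := by
  have := continuous_fermi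
  simp only [Hker_eq]
  fun_prop

lemma integrable_prod_Hker (a b : ℕ) (t : ℝ) :
    Integrable (fun p : ℝ × ℝ => p.1 ^ a * p.2 ^ b * Hker (p.1 + p.2) t)
      ((volume.restrict (Set.Ioi 0)).prod (volume.restrict (Set.Ioi 0))) := by
  have h := ((integrableOn_pow_mul_exp a 0).mul_prod (integrableOn_pow_mul_exp b 0)).norm.const_mul
    (Real.exp (-(t / 2)) + Real.exp (t / 2))
  refine h.mono' ?_ (Eventually.of_forall fun p => ?_)
  · have := continuous_Hker t
    exact (by fun_prop : Continuous fun p : ℝ × ℝ =>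
      p.1 ^ a * p.2 ^ b * Hker (p.1 + p.2) t).aestronglyMeasurable
  · rw [norm_mul, Real.norm_of_nonneg (Hker_nonneg _ _)]
    refine (mul_le_mul_of_nonneg_left (Hker_le _ t) (norm_nonneg _)).trans_eq ?_
    simp only [norm_mul, Real.norm_of_nonneg (Real.exp_pos _).le]
    rw [add_div, neg_add, Real.exp_add]
    ring

lemma integral_beta (a b : ℕ) : ∫ s in (0 : ℝ)..1, s ^ a * (1 - s) ^ b =
    (a.factorial * b.factorial : ℝ) / (a + b + 1).factorial := by
  have h := Complex.Gamma_mul_Gamma_eq_betaIntegral (s := (a : ℂ) + 1) (t := (b : ℂ) + 1)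
    (by simp; positivity) (by simp; positivity)
  rw [Complex.Gamma_nat_eq_factorial, Complex.Gamma_nat_eq_factorial,
    show (a : ℂ) + 1 + (b + 1) = ((a + b + 1 : ℕ) : ℂ) + 1 by push_cast; ring,
    Complex.Gamma_nat_eq_factorial] at h
  have hb : Complex.betaIntegral ((a : ℂ) + 1) ((b : ℂ) + 1) =
      ((∫ s in (0 : ℝ)..1, s ^ a * (1 - s) ^ b : ℝ) : ℂ) := by
    rw [Complex.betaIntegral, ← intervalIntegral.integral_ofReal]
    refine intervalIntegral.integral_congr fun s _ => ?_
    simp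
  rw [hb] at h
  have hne : ((a + b + 1).factorial : ℝ) ≠ 0 := by exact_mod_cast Nat.factorial_ne_zero _
  rw [eq_div_iff hne, mul_comm]
  exact_mod_cast h.symm

lemma integral_beta_scaled (a b : ℕ) {u : ℝ} :
    ∫ y in (0 : ℝ)..u, (u - y) ^ a * y ^ b =
      (a.factorial * b.factorial : ℝ) / (a + b + 1).factorial * u ^ (a + b + 1) := by
  have h := intervalIntegral.smul_integral_comp_mul_right (a := 0) (b := 1)
    (fun y : ℝ => (u - y) ^ a * y ^ b) u
  rw [zero_mul, one_mul] at h
  rw [← h]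
  have e : ∀ s : ℝ, (u - s * u) ^ a * (s * u) ^ b = u ^ (a + b) * (s ^ b * (1 - s) ^ a) := by
    intro s
    rw [show u - s * u = u * (1 - s) by ring, mul_pow, mul_pow]
    ring
  simp only [e]
  rw [intervalIntegral.integral_const_mul, integral_beta, smul_eq_mul, add_comm b a]
  ring

/-- The double moments of `H(x + y, t)` reduce to single moments: the shear `u = x + y` leaves, for
fixed `u`, a Beta integral over `0 < y < u`. -/
lemma integral_prod_Hker (a b : ℕ) (t : ℝ) :
    ∫ p : ℝ × ℝ, p.1 ^ a * p.2 ^ b * Hker (p.1 + p.2) t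
      ∂((volume.restrict (Set.Ioi 0)).prod (volume.restrict (Set.Ioi 0))) =
    (a.factorial * b.factorial : ℝ) / (a + b + 1).factorial *
      ∫ u in Set.Ioi (0 : ℝ), u ^ (a + b + 1) * Hker u t := by
  have hi := integrable_prod_Hker a b t
  rw [Measure.prod_restrict] at hi ⊢
  have hS : MeasurableSet (Set.Ioi (0 : ℝ) ×ˢ Set.Ioi (0 : ℝ)) :=
    measurableSet_Ioi.prod measurableSet_Ioi
  replace hi := (integrable_indicator_iff hS).mpr hi
  rw [← integral_indicator hS]
  set f : ℝ × ℝ → ℝ := (Set.Ioi (0 : ℝ) ×ˢ Set.Ioi (0 : ℝ)).indicator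
    (fun p : ℝ × ℝ => p.1 ^ a * p.2 ^ b * Hker (p.1 + p.2) t) with hf
  have hmp := measurePreserving_sub_prod (volume : Measure ℝ) (volume : Measure ℝ)
  have hcomp : Integrable (fun z : ℝ × ℝ => f (z.1 - z.2, z.2)) (volume.prod volume) :=
    hmp.integrable_comp_of_integrable hi
  have h1 : ∫ p, f p ∂(volume.prod volume) =
      ∫ z : ℝ × ℝ, f (z.1 - z.2, z.2) ∂(volume.prod volume) := by
    conv_lhs => rw [← hmp.map_eq]
    exact integral_map hmp.measurable.aemeasurable
      (by rw [hmp.map_eq]; exact hi.aestronglyMeasurable)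
  rw [h1, integral_prod _ hcomp, ← integral_const_mul,
    ← integral_indicator measurableSet_Ioi]
  congr 1
  ext u
  have h2 : ∀ y, f (u - y, y) = (Set.Ioo 0 u).indicator
      (fun y => (u - y) ^ a * y ^ b * Hker u t) y := by
    intro y
    simp only [hf, Set.indicator, Set.mem_prod, Set.mem_Ioi, Set.mem_Ioo, sub_pos, sub_add_cancel]
    simp only [and_comm]
  simp only [h2]
  rw [integral_indicator measurableSet_Ioo]
  by_cases hu : 0 < u
  · rw [Set.indicator_of_mem (by exact hu), ← integral_Ioc_eq_integral_Ioo,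
      ← intervalIntegral.integral_of_le hu.le, intervalIntegral.integral_mul_const,
      integral_beta_scaled]
    ring
  · rw [Set.indicator_of_notMem (by exact hu), Set.Ioo_eq_empty hu]
    simp

lemma pInt_pow (n : ℕ) (z : ℂ) : pInt (fun x => x ^ n) z = z ^ (n + 1) / (n + 1) := by
  unfold pInt
  have : ∀ s : ℝ, ((s : ℂ) * z) ^ n = ((s ^ n : ℝ) : ℂ) * z ^ n := fun s => by
    push_cast; ring
  simp only [this]
  rw [intervalIntegral.integral_mul_const, intervalIntegral.integral_ofReal, integral_pow]
  push_cast
  simp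
  ring

lemma pInt_const_mul (c : ℂ) (f : ℂ → ℂ) (z : ℂ) :
    pInt (fun x => c * f x) z = c * pInt f z := by
  unfold pInt
  rw [intervalIntegral.integral_const_mul]
  ring

lemma pInt_sum {ι : Type*} (s : Finset ι) (f : ι → ℂ → ℂ) (hf : ∀ i ∈ s, Continuous (f i))
    (z : ℂ) :
    pInt (fun x => ∑ i ∈ s, f i x) z = ∑ i ∈ s, pInt (f i) z := by
  unfold pInt
  rw [intervalIntegral.integral_finsetSum, Finset.mul_sum]
  intro i hi
  have := hf i hi
  exact (by fun_prop : Continuous fun x : ℝ => f i (x * z)).intervalIntegrable _ _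

/-- The polynomial iterated integral satisfies the same reduction with the same Beta constant as
`integral_prod_Hker`. -/
lemma pInt_pInt_pow (a b : ℕ) (z : ℂ) :
    pInt (fun y => pInt (fun x => x ^ a * y ^ b) (z - y)) z =
      (a.factorial * b.factorial : ℂ) / (a + b + 1).factorial *
        (z ^ (a + b + 2) / (a + b + 2)) := by
  have h1 : ∀ y : ℂ, pInt (fun x => x ^ a * y ^ b) (z - y) =
      (a + 1 : ℂ)⁻¹ * ((z - y) ^ (a + 1) * y ^ b) := by
    intro y
    simp only [mul_comm _ (y ^ b)]
    rw [pInt_const_mul, pInt_pow]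
    ring
  simp only [h1]
  rw [pInt_const_mul]
  have h2 : pInt (fun y => (z - y) ^ (a + 1) * y ^ b) z =
      z ^ (a + b + 2) * ((∫ s in (0 : ℝ)..1, s ^ b * (1 - s) ^ (a + 1) : ℝ) : ℂ) := by
    unfold pInt
    rw [← intervalIntegral.integral_ofReal]
    have : ∀ s : ℝ, (z - s * z) ^ (a + 1) * (s * z) ^ b =
        z ^ (a + b + 1) * ((s ^ b * (1 - s) ^ (a + 1) : ℝ) : ℂ) := fun s => by
      rw [show z - s * z = z * (1 - s) by ring, mul_pow, mul_pow]
      push_cast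
      ring
    simp only [this]
    rw [intervalIntegral.integral_const_mul]
    ring
  have hf : ((b + (a + 1) + 1).factorial : ℂ) = (a + b + 2) * (a + b + 1).factorial := by
    rw [show b + (a + 1) + 1 = (a + b + 1) + 1 by ring, Nat.factorial_succ]
    push_cast; ring
  have hf' : ((a + 1).factorial : ℂ) = (a + 1) * a.factorial := by
    rw [Nat.factorial_succ]; push_cast; ring
  rw [h2, integral_beta]
  push_cast
  rw [hf, hf']
  have h3 : (a + 1 : ℂ) ≠ 0 := by exact_mod_cast Nat.succ_ne_zero a
  have h4 : (a + b + 2 : ℂ) ≠ 0 := by exact_mod_cast Nat.succ_ne_zero (a + b + 1)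
  have h5 : ((a + b + 1).factorial : ℂ) ≠ 0 := by exact_mod_cast Nat.factorial_ne_zero _
  field_simp

/-- An even polynomial only involves its even coefficients. -/
lemma even_coeffs {f : ℂ → ℂ} {N : ℕ} {c : ℕ → ℂ}
    (hf : ∀ x, f x = ∑ k ∈ Finset.range N, c k * x ^ k)
    (he : ∀ x, f (-x) = f x) (x : ℂ) :
    f x = ∑ k ∈ (Finset.range N).filter Even, c k * x ^ k := by
  have h : f x = (f x + f (-x)) / 2 := by rw [he]; ring
  rw [h, hf, hf, ← Finset.sum_add_distrib, Finset.sum_filter, Finset.sum_div]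
  refine Finset.sum_congr rfl fun k _ => ?_
  split_ifs with hk
  · rw [hk.neg_pow]; ring
  · rw [(Nat.not_even_iff_odd.mp hk).neg_pow]; ring

section single
variable {f : ℂ → ℂ} {N : ℕ} {c : ℕ → ℂ}

lemma integrable_poly_mul_Hker (hf : ∀ x, f x = ∑ k ∈ Finset.range N, c k * x ^ k) (t : ℝ) :
    IntegrableOn (fun x : ℝ => f x * (Hker x t : ℂ) * x) (Set.Ioi 0) := by
  have h : ∀ x : ℝ, f x * (Hker x t : ℂ) * x =
      ∑ k ∈ Finset.range N, c k * ((x ^ (k + 1) * Hker x t : ℝ) : ℂ) := fun x => by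
    rw [hf, Finset.sum_mul, Finset.sum_mul]
    refine Finset.sum_congr rfl fun k _ => ?_
    push_cast; ring
  simp only [h]
  exact integrable_finsetSum _ fun k _ => (integrableOn_pow_mul_Hker (k + 1) t).ofReal.const_mul _

/-- The linear terms: an even polynomial `f` against the kernel. Evenness makes all powers of `x` in
`f x * x` odd, so that `Good.odd_pow` applies. -/
lemma Good.single (hf : ∀ x, f x = ∑ k ∈ Finset.range N, c k * x ^ k) (he : ∀ x, f (-x) = f x) :
    Good (fun t => ∫ x in Set.Ioi (0 : ℝ), f x * (Hker x t : ℂ) * x)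
      (fun z => pInt (fun x => f x * x) z) := by
  have hJ : ∀ t : ℝ, ∫ x in Set.Ioi (0 : ℝ), f x * (Hker x t : ℂ) * x =
      ∑ k ∈ (Finset.range N).filter Even,
        c k * ((∫ x in Set.Ioi (0 : ℝ), x ^ (k + 1) * Hker x t : ℝ) : ℂ) := fun t => by
    have h : ∀ x : ℝ, f x * (Hker x t : ℂ) * x =
        ∑ k ∈ (Finset.range N).filter Even, c k * ((x ^ (k + 1) * Hker x t : ℝ) : ℂ) := fun x => by
      rw [even_coeffs hf he, Finset.sum_mul, Finset.sum_mul]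
      refine Finset.sum_congr rfl fun k _ => ?_
      push_cast; ring
    simp only [h]
    rw [integral_finsetSum _ fun k _ =>
      (integrableOn_pow_mul_Hker (k + 1) t).ofReal.const_mul _]
    refine Finset.sum_congr rfl fun k _ => ?_
    rw [integral_const_mul, ← integral_complex_ofReal]
  have hR : ∀ z : ℂ, pInt (fun x => f x * x) z =
      ∑ k ∈ (Finset.range N).filter Even, c k * (z ^ (k + 2) / (k + 2)) := fun z => by
    have h : ∀ x : ℂ, f x * x =
        ∑ k ∈ (Finset.range N).filter Even, c k * x ^ (k + 1) := fun x => by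
      rw [even_coeffs hf he, Finset.sum_mul]
      exact Finset.sum_congr rfl fun k _ => by ring
    simp only [h]
    rw [pInt_sum _ _ fun k _ => by fun_prop]
    refine Finset.sum_congr rfl fun k _ => ?_
    rw [pInt_const_mul, pInt_pow]
    push_cast
    ring
  simp only [hJ, hR]
  refine Good.sum _ fun k hk => Good.const_mul _ ?_
  obtain ⟨r, rfl⟩ := (Finset.mem_filter.mp hk).2
  have := Good.odd_pow r
  rw [← two_mul]
  exact_mod_cast this

end single

/-- The double-integral terms: a polynomial `f`, even in both variables, against `H(x + y, t)`. -/
lemma Good.double {f : ℂ → ℂ → ℂ} {N : ℕ} {c : ℕ → ℕ → ℂ}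
    (hf : ∀ x y, f x y = ∑ k ∈ Finset.range N, ∑ l ∈ Finset.range N, c k l * x ^ k * y ^ l)
    (he : ∀ x y, f (-x) y = f x y) (he' : ∀ x y, f x (-y) = f x y) :
    Good (fun t => ∫ x in Set.Ioi (0 : ℝ), ∫ y in Set.Ioi (0 : ℝ),
        f x y * (Hker (x + y) t : ℂ) * x * y)
      (fun z => pInt (fun y => pInt (fun x => f x y * x * y) (z - y)) z) := by
  set S := (Finset.range N).filter Even with hS
  have hf' : ∀ x y, f x y = ∑ q ∈ S ×ˢ S, c q.1 q.2 * (x ^ q.1 * y ^ q.2) := by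
    intro x y
    have h1 : f x y = ∑ l ∈ S, (∑ k ∈ Finset.range N, c k l * x ^ k) * y ^ l := by
      refine even_coeffs (f := f x) (fun y => ?_) (he' x) y
      rw [hf, Finset.sum_comm]
      simp only [Finset.sum_mul]
    rw [even_coeffs (f := fun x => f x y) (N := N) (c := fun k => ∑ l ∈ S, c k l * y ^ l)
      (fun x => ?_) (fun x => he x y) x, Finset.sum_product]
    · refine Finset.sum_congr rfl fun k _ => ?_
      rw [Finset.sum_mul]
      exact Finset.sum_congr rfl fun l _ => by ring
    · have h1 : f x y = ∑ l ∈ S, (∑ k ∈ Finset.range N, c k l * x ^ k) * y ^ l := by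
        refine even_coeffs (f := f x) (fun y => ?_) (he' x) y
        rw [hf, Finset.sum_comm]
        simp only [Finset.sum_mul]
      simp only [h1, Finset.sum_mul]
      rw [Finset.sum_comm]
      exact Finset.sum_congr rfl fun l _ => Finset.sum_congr rfl fun k _ => by ring
  have hJ : ∀ t : ℝ, (∫ x in Set.Ioi (0 : ℝ), ∫ y in Set.Ioi (0 : ℝ),
        f x y * (Hker (x + y) t : ℂ) * x * y) =
      ∑ q ∈ S ×ˢ S, c q.1 q.2 * (((q.1 + 1).factorial * (q.2 + 1).factorial : ℂ) /
        (q.1 + 1 + (q.2 + 1) + 1).factorial *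
          ((∫ x in Set.Ioi (0 : ℝ), x ^ (q.1 + 1 + (q.2 + 1) + 1) * Hker x t : ℝ) : ℂ)) := by
    intro t
    have h : ∀ x y : ℝ, f x y * (Hker (x + y) t : ℂ) * x * y = ∑ q ∈ S ×ˢ S, c q.1 q.2 *
        ((x ^ (q.1 + 1) * y ^ (q.2 + 1) * Hker (x + y) t : ℝ) : ℂ) := fun x y => by
      rw [hf', Finset.sum_mul, Finset.sum_mul, Finset.sum_mul]
      refine Finset.sum_congr rfl fun k _ => ?_
      push_cast; ring
    have hint : ∀ q : ℕ × ℕ, Integrable (fun p : ℝ × ℝ => c q.1 q.2 *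
        ((p.1 ^ (q.1 + 1) * p.2 ^ (q.2 + 1) * Hker (p.1 + p.2) t : ℝ) : ℂ))
        ((volume.restrict (Set.Ioi 0)).prod (volume.restrict (Set.Ioi 0))) := fun q =>
      (integrable_prod_Hker (q.1 + 1) (q.2 + 1) t).ofReal.const_mul _
    simp only [h]
    rw [← integral_prod (fun p : ℝ × ℝ => ∑ q ∈ S ×ˢ S, c q.1 q.2 *
        ((p.1 ^ (q.1 + 1) * p.2 ^ (q.2 + 1) * Hker (p.1 + p.2) t : ℝ) : ℂ))
        (integrable_finsetSum _ fun q _ => hint q), integral_finsetSum _ fun q _ => hint q]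
    refine Finset.sum_congr rfl fun q _ => ?_
    rw [integral_const_mul, integral_complex_ofReal, integral_prod_Hker]
    push_cast
    rfl
  have hR : ∀ z : ℂ, pInt (fun y => pInt (fun x => f x y * x * y) (z - y)) z =
      ∑ q ∈ S ×ˢ S, c q.1 q.2 * (((q.1 + 1).factorial * (q.2 + 1).factorial : ℂ) /
        (q.1 + 1 + (q.2 + 1) + 1).factorial *
          (z ^ (q.1 + 1 + (q.2 + 1) + 2) / (q.1 + 1 + (q.2 + 1) + 2))) := by
    intro z
    have h : ∀ x y : ℂ, f x y * x * y = ∑ q ∈ S ×ˢ S, c q.1 q.2 *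
        (x ^ (q.1 + 1) * y ^ (q.2 + 1)) := fun x y => by
      rw [hf', Finset.sum_mul, Finset.sum_mul]
      exact Finset.sum_congr rfl fun k _ => by ring
    have h1 : ∀ y : ℂ, pInt (fun x => f x y * x * y) (z - y) = ∑ q ∈ S ×ˢ S, c q.1 q.2 *
        pInt (fun x => x ^ (q.1 + 1) * y ^ (q.2 + 1)) (z - y) := fun y => by
      simp only [h]
      rw [pInt_sum _ _ fun k _ => by fun_prop]
      simp only [pInt_const_mul]
    have h2 : ∀ q : ℕ × ℕ, Continuous fun y : ℂ =>
        pInt (fun x => x ^ (q.1 + 1) * y ^ (q.2 + 1)) (z - y) := fun q => by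
      simp only [mul_comm _ (_ ^ (q.2 + 1)), pInt_const_mul, pInt_pow]
      fun_prop
    simp only [h1]
    rw [pInt_sum _ _ fun q _ => (h2 q).const_mul _]
    refine Finset.sum_congr rfl fun q _ => ?_
    rw [pInt_const_mul, pInt_pInt_pow]
    push_cast
    rfl
  simp only [hJ, hR]
  refine Good.sum _ fun q hq => Good.const_mul _ (Good.const_mul _ ?_)
  obtain ⟨h1, h2⟩ := Finset.mem_product.mp hq
  obtain ⟨r, hr⟩ := (Finset.mem_filter.mp h1).2
  obtain ⟨s, hs⟩ := (Finset.mem_filter.mp h2).2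
  have := Good.odd_pow (r + s + 1)
  rw [hr, hs, show r + r + 1 + (s + s + 1) + 1 = 2 * (r + s + 1) + 1 by ring,
    show r + r + 1 + (s + s + 1) + 2 = 2 * (r + s + 1) + 2 by ring]
  convert! this using 3
  push_cast
  ring

/-! ### Polynomial functions -/

/-- A complex-valued function of complex variables given by a polynomial. -/
def PolyFn {σ : Type*} (f : (σ → ℂ) → ℂ) : Prop :=
  ∃ p : MvPolynomial σ ℂ, ∀ z, f z = MvPolynomial.eval z p

namespace PolyFn

variable {σ τ : Type*} {n : ℕ}

lemma const (c : ℂ) : PolyFn fun _ : σ → ℂ => c := ⟨MvPolynomial.C c, by simp⟩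

lemma coord (i : σ) : PolyFn fun z : σ → ℂ => z i := ⟨MvPolynomial.X i, by simp⟩

lemma add {f g : (σ → ℂ) → ℂ} (hf : PolyFn f) (hg : PolyFn g) : PolyFn fun z => f z + g z := by
  obtain ⟨p, hp⟩ := hf
  obtain ⟨q, hq⟩ := hg
  exact ⟨p + q, fun z => by simp [hp, hq]⟩

lemma mul {f g : (σ → ℂ) → ℂ} (hf : PolyFn f) (hg : PolyFn g) : PolyFn fun z => f z * g z := by
  obtain ⟨p, hp⟩ := hf
  obtain ⟨q, hq⟩ := hg
  exact ⟨p * q, fun z => by simp [hp, hq]⟩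

lemma sub {f g : (σ → ℂ) → ℂ} (hf : PolyFn f) (hg : PolyFn g) : PolyFn fun z => f z - g z := by
  simpa [sub_eq_add_neg] using hf.add ((const (-1)).mul hg)

lemma pow {f : (σ → ℂ) → ℂ} (hf : PolyFn f) (k : ℕ) : PolyFn fun z => f z ^ k := by
  obtain ⟨p, hp⟩ := hf
  exact ⟨p ^ k, fun z => by simp [hp]⟩

lemma sum {ι : Type*} (s : Finset ι) {f : ι → (σ → ℂ) → ℂ} (hf : ∀ i ∈ s, PolyFn (f i)) :
    PolyFn fun z => ∑ i ∈ s, f i z := by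
  classical
  induction s using Finset.induction_on with
  | empty => simpa using const 0
  | insert a s ha ih =>
    simp only [Finset.sum_insert ha]
    exact (hf a (by simp)).add (ih fun i hi => hf i (by simp [hi]))

lemma ite {P : Prop} [Decidable P] {f : (σ → ℂ) → ℂ} (hf : PolyFn f) :
    PolyFn fun z => if P then f z else 0 := by
  by_cases hP : P
  · simpa [hP] using hf
  · simpa [hP] using const 0

lemma comp {f : (τ → ℂ) → ℂ} (hf : PolyFn f) {u : (σ → ℂ) → τ → ℂ}
    (hu : ∀ i, PolyFn fun z => u z i) : PolyFn fun z => f (u z) := by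
  obtain ⟨p, hp⟩ := hf
  choose q hq using hu
  refine ⟨MvPolynomial.bind₁ q p, fun z => ?_⟩
  beta_reduce
  rw [hp, MvPolynomial.eval, MvPolynomial.eval, MvPolynomial.eval₂Hom_bind₁]
  congr 2
  ext i
  exact hq i z

lemma ev (p : MvPolynomial (Fin n) ℝ) : PolyFn (ev p) :=
  ⟨p.map (algebraMap ℝ ℂ), fun _ => (MvPolynomial.eval_map _ _ _).symm⟩

lemma cons {a : (σ → ℂ) → ℂ} (ha : PolyFn a) {u : (σ → ℂ) → Fin n → ℂ}
    (hu : ∀ i, PolyFn fun z => u z i) (i : Fin (n + 1)) :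
    PolyFn fun z => (Fin.cons (a z) (u z) : Fin (n + 1) → ℂ) i := by
  cases i using Fin.cases with
  | zero => simpa using ha
  | succ i => simpa using hu i

/-- Expansion of a polynomial in its first variable, the number of terms being any bound `N`
exceeding the degree in that variable. -/
lemma eval_cons_eq_sum (p : MvPolynomial (Fin (n + 1)) ℂ) {N : ℕ} (hN : p.degreeOf 0 < N)
    (x : ℂ) (z : Fin n → ℂ) :
    MvPolynomial.eval (Fin.cons x z : Fin (n + 1) → ℂ) p = ∑ k ∈ Finset.range N,
      MvPolynomial.eval z ((MvPolynomial.finSuccEquiv ℂ n p).coeff k) * x ^ k := by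
  rw [MvPolynomial.eval_eq_eval_mv_eval', Polynomial.eval_eq_sum_range' (n := N)]
  · simp [Polynomial.coeff_map]
  · exact Polynomial.natDegree_map_le.trans_lt (by rwa [MvPolynomial.natDegree_finSuccEquiv])

lemma exists_coeff {f : (Fin (n + 1) → ℂ) → ℂ} (hf : PolyFn f) :
    ∃ (N : ℕ) (c : ℕ → (Fin n → ℂ) → ℂ), (∀ k, PolyFn (c k)) ∧
      ∀ x z, f (Fin.cons x z) = ∑ k ∈ Finset.range N, c k z * x ^ k := by
  obtain ⟨p, hp⟩ := hf
  exact ⟨p.degreeOf 0 + 1, _, fun k => ⟨_, fun z => rfl⟩,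
    fun x z => (hp _).trans (eval_cons_eq_sum p (Nat.lt_succ_self _) x z)⟩

/-- A polynomial function of two variables as a double sum over a square range of exponents. -/
lemma exists_coeff₂ {f : (Fin 2 → ℂ) → ℂ} (hf : PolyFn f) :
    ∃ (N : ℕ) (c : ℕ → ℕ → ℂ), ∀ x y, f ![x, y] =
      ∑ k ∈ Finset.range N, ∑ l ∈ Finset.range N, c k l * x ^ k * y ^ l := by
  obtain ⟨p, hp⟩ := hf
  refine ⟨max (p.degreeOf 0) (p.degreeOf 1) + 1, fun k l => MvPolynomial.eval ![]
    ((MvPolynomial.finSuccEquiv ℂ 0 ((MvPolynomial.finSuccEquiv ℂ 1 p).coeff k)).coeff l),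
    fun x y => ?_⟩
  rw [hp]
  refine (eval_cons_eq_sum p (Nat.lt_succ_of_le (le_max_left _ (p.degreeOf 1))) x ![y]).trans ?_
  refine Finset.sum_congr rfl fun k _ => ?_
  have h := eval_cons_eq_sum ((MvPolynomial.finSuccEquiv ℂ 1 p).coeff k)
    (N := max (p.degreeOf 0) (p.degreeOf 1) + 1)
    (Nat.lt_succ_of_le ((MvPolynomial.degreeOf_coeff_finSuccEquiv p 0 k).trans
      (le_max_right _ _))) y ![]
  refine (congrArg (· * x ^ k) h).trans ?_
  rw [Finset.sum_mul]
  exact Finset.sum_congr rfl fun l _ => by ring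

/-- Polynomial functions are stable under integration from `0` to a polynomial endpoint. -/
lemma pInt {f : ℂ → (Fin n → ℂ) → ℂ}
    (hf : PolyFn fun w : Fin (n + 1) → ℂ => f (w 0) (Fin.tail w))
    {a : (Fin n → ℂ) → ℂ} (ha : PolyFn a) : PolyFn fun z => pInt (fun x => f x z) (a z) := by
  obtain ⟨N, c, hc, h⟩ := hf.exists_coeff
  simp only [Fin.cons_zero, Fin.tail_cons] at h
  have h' : ∀ z, _root_.pInt (fun x => f x z) (a z) =
      ∑ k ∈ Finset.range N, c k z * (a z ^ (k + 1) * (k + 1 : ℂ)⁻¹) := fun z => by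
    simp only [h]
    rw [pInt_sum _ _ fun k _ => by fun_prop]
    simp only [pInt_const_mul, pInt_pow, div_eq_mul_inv]
  simp only [h']
  exact sum _ fun k _ => (hc k).mul ((ha.pow _).mul (const _))

/-- Polynomial functions agreeing at all real points agree at all complex points. -/
lemma eq_of_real {f g : (Fin n → ℂ) → ℂ} (hf : PolyFn f) (hg : PolyFn g)
    (h : ∀ L : Fin n → ℝ, f (cplx L) = g (cplx L)) (z : Fin n → ℂ) : f z = g z := by
  obtain ⟨p, hp⟩ := hf
  obtain ⟨q, hq⟩ := hg
  have : p = q := by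
    refine MvPolynomial.funext_set (fun _ => Set.range ((↑) : ℝ → ℂ))
      (fun _ => Set.infinite_range_of_injective Complex.ofReal_injective) fun x hx => ?_
    choose L hL using fun i => hx i (Set.mem_univ i)
    obtain rfl : cplx L = x := funext hL
    rw [← hp, ← hq, h]
  rw [hp, hq, this]

/-- The left-hand side of the new recursion is polynomial in `L`. -/
lemma starLHS {f : (Fin (n + 1) → ℂ) → ℂ} (hf : PolyFn f) :
    PolyFn fun L : Fin (n + 1) → ℂ =>
      ((L 0 + 2 * (π : ℂ) * Complex.I) *
        f (Fin.cons (L 0 + 2 * (π : ℂ) * Complex.I) (Fin.tail L)) -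
      (L 0 - 2 * (π : ℂ) * Complex.I) *
        f (Fin.cons (L 0 - 2 * (π : ℂ) * Complex.I) (Fin.tail L))) /
      (4 * (π : ℂ) * Complex.I) := by
  have h1 := (coord (0 : Fin (n + 1))).add (const (2 * (π : ℂ) * Complex.I))
  have h2 := (coord (0 : Fin (n + 1))).sub (const (2 * (π : ℂ) * Complex.I))
  have ht : ∀ i : Fin n, PolyFn fun L : Fin (n + 1) → ℂ => Fin.tail L i := fun i => coord i.succ
  simp only [div_eq_mul_inv]
  exact ((h1.mul (hf.comp (cons h1 ht))).sub (h2.mul (hf.comp (cons h2 ht)))).mul (const _)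

/-- The right-hand side of the new recursion is polynomial in `L`. -/
lemma newRHS (F : MirzFamily) (g m : ℕ) :
    PolyFn fun L => newRHS (fun g' n' => _root_.ev (F.V g' n')) g m L := by
  unfold _root_.newRHS
  refine ((ite ((const _).mul (pInt (pInt ?_ ?_) (coord _)))).add
    ((const _).mul (sum _ fun g₁ _ => sum _ fun I _ => ite (pInt (pInt ?_ ?_) (coord _))))).add
    ((const _).mul (sum _ fun j _ => ite ((pInt ?_ ((coord _).add (coord _))).add
      (pInt ?_ ((coord _).sub (coord _))))))
  · exact (((ev _).comp (cons (coord 0) (cons (coord 1) fun i => coord i.succ.succ.succ))).mul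
      (coord 0)).mul (coord 1)
  · exact (coord 1).sub (coord 0)
  · exact ((((ev _).comp (cons (coord 0) fun i => coord _)).mul
      ((ev _).comp (cons (coord 1) fun i => coord _))).mul (coord 0)).mul (coord 1)
  · exact (coord 1).sub (coord 0)
  · exact ((ev _).comp (cons (coord 0) fun i => coord _)).mul (coord 0)
  · exact ((ev _).comp (cons (coord 0) fun i => coord _)).mul (coord 0)

end PolyFn

/-! ### The new recursion -/

/-- `Good.double` without reference to coefficients. -/
lemma Good.of_polyFn {f : ℂ → ℂ → ℂ} (hf : PolyFn fun w : Fin 2 → ℂ => f (w 0) (w 1))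
    (he : ∀ x y, f (-x) y = f x y) (he' : ∀ x y, f x (-y) = f x y) :
    Good (fun t => ∫ x in Set.Ioi (0 : ℝ), ∫ y in Set.Ioi (0 : ℝ),
        f x y * (Hker (x + y) t : ℂ) * x * y)
      (fun z => pInt (fun y => pInt (fun x => f x y * x * y) (z - y)) z) := by
  obtain ⟨N, c, hc⟩ := hf.exists_coeff₂
  exact Good.double hc he he'

namespace MirzFamily

variable (F : MirzFamily)

lemma ev_cons_neg {g n : ℕ} (h : StableIdx g (n + 1)) (x : ℂ) (T : Fin n → ℂ) :
    ev (F.V g (n + 1)) (Fin.cons (-x) T) = ev (F.V g (n + 1)) (Fin.cons x T) := by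
  have := F.even g (n + 1) h 0 (Fin.cons x T)
  rwa [Fin.cons_zero, Fin.update_cons_zero] at this

lemma ev_cons_cons_neg {g n : ℕ} (h : StableIdx g (n + 2)) (x y : ℂ) (T : Fin n → ℂ) :
    ev (F.V g (n + 2)) (Fin.cons x (Fin.cons (-y) T : Fin (n + 1) → ℂ)) =
      ev (F.V g (n + 2)) (Fin.cons x (Fin.cons y T : Fin (n + 1) → ℂ)) := by
  have := F.even g (n + 2) h (Fin.succ 0) (Fin.cons x (Fin.cons y T : Fin (n + 1) → ℂ))
  rwa [Fin.cons_succ, Fin.cons_zero, ← Fin.cons_update, Fin.update_cons_zero] at this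

/-- The terms merging the boundaries `L₁` and `L_j = a`. -/
lemma good_single {g n : ℕ} (h : StableIdx g (n + 1)) (T : Fin n → ℂ) (a : ℝ) :
    Good (fun t => ∫ x in Set.Ioi (0 : ℝ),
        ev (F.V g (n + 1)) (Fin.cons (x : ℂ) T) *
          ((Hker x (t + a) + Hker x (t - a) : ℝ) : ℂ) * (x : ℂ))
      (fun z => pInt (fun x => ev (F.V g (n + 1)) (Fin.cons x T) * x) (z + a) +
        pInt (fun x => ev (F.V g (n + 1)) (Fin.cons x T) * x) (z - a)) := by
  obtain ⟨N, c, -, hc⟩ := (PolyFn.ev (F.V g (n + 1))).exists_coeff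
  have hf := fun x => hc x T
  have hs := Good.single hf fun x => F.ev_cons_neg h x T
  have hi := integrable_poly_mul_Hker hf
  convert! (hs.shift a).add (hs.shift (-a)) using 2 with t z
  · rw [← integral_add (hi _) (hi _)]
    refine integral_congr_ae (Eventually.of_forall fun x => ?_)
    simp only [← sub_eq_add_neg]
    push_cast
    ring
  · push_cast
    rfl

/-- The terms splitting the surface into two components. -/
lemma good_product {g₁ g₂ a b : ℕ} (h₁ : StableIdx g₁ (a + 1)) (h₂ : StableIdx g₂ (b + 1))
    (T₁ : Fin a → ℂ) (T₂ : Fin b → ℂ) :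
    Good (fun t => ∫ x in Set.Ioi (0 : ℝ), ∫ y in Set.Ioi (0 : ℝ),
        ev (F.V g₁ (a + 1)) (Fin.cons (x : ℂ) T₁) * ev (F.V g₂ (b + 1)) (Fin.cons (y : ℂ) T₂) *
          (Hker (x + y) t : ℂ) * x * y)
      (fun z => pInt (fun y => pInt (fun x => ev (F.V g₁ (a + 1)) (Fin.cons x T₁) *
        ev (F.V g₂ (b + 1)) (Fin.cons y T₂) * x * y) (z - y)) z) := by
  have hp : ∀ (g n : ℕ) (T : Fin n → ℂ) (i : Fin 2), PolyFn fun w : Fin 2 → ℂ =>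
      ev (F.V g (n + 1)) (Fin.cons (w i) T) := fun g n T i =>
    (PolyFn.ev (F.V g (n + 1))).comp (PolyFn.cons (PolyFn.coord i) fun k => PolyFn.const (T k))
  exact Good.of_polyFn (f := fun x y => ev (F.V g₁ (a + 1)) (Fin.cons x T₁) *
    ev (F.V g₂ (b + 1)) (Fin.cons y T₂)) ((hp g₁ a T₁ 0).mul (hp g₂ b T₂ 1))
    (fun x y => by rw [F.ev_cons_neg h₁]) (fun x y => by rw [F.ev_cons_neg h₂])

/-- Mirzakhani's recursion, read as a statement about `s ↦ s · V(s, T)` for fixed real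
`T = (L_2, …, L_n)`: its derivative is related by `Good` to the right-hand side of the new
recursion. -/
lemma good_recursion {g m : ℕ} (hgm : 4 ≤ 2 * g + (m + 1)) (T : Fin m → ℝ) :
    Good (fun t => deriv (fun s : ℝ =>
        (s : ℂ) * ev (F.V g (m + 1)) (Fin.cons (s : ℂ) (cplx T))) t)
      (fun z => newRHS (fun g' n' => ev (F.V g' n')) g m (Fin.cons z (cplx T))) := by
  have hr := fun t : ℝ => F.recur g m hgm (Fin.cons t T)
  simp only [MirzEq, tupIns, Fin.tail_cons, Fin.cons_zero, Fin.cons_succ] at hr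
  simp only [hr, newRHS, tupIns, Fin.tail_cons, Fin.cons_zero, Fin.cons_succ]
  refine ((Good.ite fun h => Good.const_mul _ ?_).add (Good.const_mul _ (Good.sum _ fun g₁ _ =>
    Good.sum _ fun I _ => Good.ite fun h => ?_))).add
    (Good.const_mul _ (Good.sum _ fun j _ => Good.ite fun h => ?_))
  · exact Good.of_polyFn (f := fun x y => ev (F.V (g - 1) (m + 2))
        (Fin.cons x (Fin.cons y (cplx T) : Fin (m + 1) → ℂ)))
      ((PolyFn.ev _).comp (PolyFn.cons (PolyFn.coord 0)
        (PolyFn.cons (PolyFn.coord 1) fun i => PolyFn.const _)))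
      (fun x y => F.ev_cons_neg h.2 x _) (fun x y => F.ev_cons_cons_neg h.2 x y _)
  · exact F.good_product h.1 h.2 _ _
  · exact F.good_single h _ (T j)

/-- The new recursion for real `L_2, …, L_n` and complex `L_1`. -/
lemma starEq_cons {g m : ℕ} (hgm : 4 ≤ 2 * g + (m + 1)) (T : Fin m → ℝ) (z : ℂ) :
    StarEq (fun g' n' => ev (F.V g' n')) g m (Fin.cons z (cplx T)) := by
  obtain ⟨G, hG, hR⟩ := F.good_recursion hgm T
  obtain ⟨N, c, -, hc⟩ := (PolyFn.ev (F.V g (m + 1))).exists_coeff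
  set W : Polynomial ℂ := Polynomial.X * ∑ k ∈ Finset.range N,
    Polynomial.C (c k (cplx T)) * Polynomial.X ^ k with hW
  have hWe : ∀ s : ℂ, s * ev (F.V g (m + 1)) (Fin.cons s (cplx T)) = W.eval s := fun s => by
    simp [hW, hc, Polynomial.eval_finsetSum]
  -- `W` and `G` have the same derivative, hence differ by a constant, which cancels in the
  -- difference quotient
  have hder : W.derivative = G.derivative := by
    refine Polynomial.eq_of_infinite_eval_eq _ _
      ((Set.infinite_range_of_injective Complex.ofReal_injective).mono ?_)
    rintro _ ⟨t, rfl⟩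
    change W.derivative.eval (t : ℂ) = G.derivative.eval (t : ℂ)
    rw [← hG t]
    simp only [hWe]
    exact ((W.hasDerivAt (t : ℂ)).comp_ofReal).deriv.symm
  have hWG : ∃ a, W = G + Polynomial.C a := by
    have h0 : (W - G).natDegree = 0 := Polynomial.derivative_eq_zero.mp (by
      rw [Polynomial.derivative_sub, hder, sub_self])
    exact ⟨_, by rw [← Polynomial.eq_C_of_natDegree_eq_zero h0]; ring⟩
  obtain ⟨a, ha⟩ := hWG
  refine Eq.trans ?_ (hR z)
  rw [Fin.cons_zero, Fin.tail_cons, hWe, hWe, ha]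
  simp

end MirzFamily

/-- Every Mirzakhani family satisfies the new recursion (★)
at every `(g,n)` with `2g - 2 + n ≥ 2` and all complex boundary lengths. -/
theorem mirzakhani_family_satisfies_new_recursion (F : MirzFamily) :
    ∀ g m, 4 ≤ 2 * g + (m + 1) → ∀ L : Fin (m + 1) → ℂ,
      StarEq (fun g' n' => ev (F.V g' n')) g m L := by
  intro g m hgm L
  refine PolyFn.eq_of_real (PolyFn.ev _).starLHS (PolyFn.newRHS F g m) (fun L => ?_) L
  have h := F.starEq_cons hgm (Fin.tail L) (L 0)
  have hL : (Fin.cons (L 0 : ℂ) (cplx (Fin.tail L)) : Fin (m + 1) → ℂ) = cplx L := by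
    ext i
    cases i using Fin.cases <;> rfl
  rwa [hL] at h

end
end

section
/- Let (V^{su}_{g,n}) be a Stanford–Witten family. Then for every (g,n) with g ≥ 1, n ≥ 1, (g,n) ≠ (1,1), and all complex numbers L_1,…,L_n: (L_1+2πi)·V^{su}_{g,n}(L_1+2πi,L_2,…,L_n) + (L_1−2πi)·V^{su}_{g,n}(L_1−2πi,L_2,…,L_n) = −½ ∫₀^{L_1} V^{su}_{g−1,n+1}(x,L_1−x,L_2,…,L_n)·x(L_1−x) dx − ½ Σ ∫₀^{L_1} V^{su}_{g_1,|I|+1}(x,L_I)·V^{su}_{g_2,|J|+1}(L_1−x,L_J)·x(L_1−x) dx − Σ_{j=2}^n [(L_1+L_j)·V^{su}_{g,n−1}(L_1+L_j,L_2,…,L̂_j,…,L_n) + (L_1−L_j)·V^{su}_{g,n−1}(L_1−L_j,L_2,…,L̂_j,…,L_n)], where the middle sum runs over ordered pairs (g_1,I),(g_2,J) with g_1+g_2 = g, g_1 ≥ 1, g_2 ≥ 1 and I ⊔ J = {2,…,n}, and the first term is omitted when g = 1. -/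
/-!
Write `S f (z) = ∫ f (x + z) / cosh (x / 4) dx` for a polynomial `f`; this is again a polynomial in
`z`. Two facts carry the proof.

* For an odd polynomial `f`, the integral of `f` against `H^{su}(·, t)` over the half line is
  `-S f (t) / 2` (`integral_Hsu`). A quadrant integral of `P (x, y)` against `H^{su}(x + y, t)` is,
  after the substitution `u = x + y`, the half-line integral of the convolution
  `u ↦ ∫₀ᵘ P (x, u - x) dx` (`integral_integral_Hsu`), which is odd when `P` is invariant under
  `(x, y) ↦ (-x, -y)`.
* `S f (z + 2πi) + S f (z - 2πi) = 8π f (z)` (`sechTr_shift`). Indeed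
  `sinh ((x ± 2πi) / 4) = ± i cosh (x / 4)`, so the left side is a difference of integrals of
  `f (· + z) / sinh (· / 4)` over the lines `Im = ± 2π`, and between these lines the only pole is the
  simple one at the origin. Subtracting the constant `f (z)` makes that pole removable, and the
  constant is handled by `∫ 1 / cosh (x / 4) dx = 4π`.

By the first fact and the evenness of the polynomials `V_{g,n}`, the Stanford–Witten recursion
expresses `4π L₁ V_{g,n}` through transforms `S` (`sw_sechTr`). Both sides are polynomial in `L₁`, so
the identity extends to complex `L₁`. Adding its values at `L₁ ± 2πi`, the second fact removes every
transform and leaves the claim for real `L₂, …, Lₙ` (`sstar_real`). Finally the difference of the two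
sides of the claim is a polynomial function of all the lengths (`polyMap_sstar`), so it vanishes on
`ℂⁿ` because it vanishes on `ℝⁿ`.

Polynomial functions are handled through the predicate `PolyMap`, whose closure properties under
sums, products, substitution and integration give all the polynomiality statements.
-/

open scoped Real Topology
open MeasureTheory Filter

noncomputable section

/-- The super kernel `H^{su}(x, L)`. -/
def Hsu (x L : ℝ) : ℝ :=
  (1 / Real.cosh ((x + L) / 4) - 1 / Real.cosh ((x - L) / 4)) / 2

/-- The Stanford–Witten recursion at `(g, n) = (g, m+1)`, for real boundary lengths;
the first term is omitted when `g = 1`, and in the splitting sum `g₁, g₂ ≥ 1`. -/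
def SWEq (V : (g n : ℕ) → (Fin n → ℂ) → ℂ) (g m : ℕ) (L : Fin (m + 1) → ℝ) : Prop :=
  4 * (π : ℂ) * (L 0 : ℂ) * V g (m + 1) (cplx L) =
    (if 2 ≤ g then
      (1 / 2 : ℂ) * ∫ x in Set.Ioi (0 : ℝ), ∫ y in Set.Ioi (0 : ℝ),
        V (g - 1) (m + 2) (Fin.cons (x : ℂ) (Fin.cons (y : ℂ) (cplx (Fin.tail L)))) *
          ((Hsu (x + y) (L 0) : ℝ) : ℂ) * (x : ℂ) * (y : ℂ)
    else 0)
    + (1 / 2 : ℂ) * ∑ g₁ ∈ Finset.range (g + 1),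
        ∑ I ∈ (Finset.univ : Finset (Fin m)).powerset,
        (if 1 ≤ g₁ ∧ 1 ≤ g - g₁ then
          ∫ x in Set.Ioi (0 : ℝ), ∫ y in Set.Ioi (0 : ℝ),
            V g₁ (I.card + 1) (tupIns (x : ℂ) (cplx (Fin.tail L)) I) *
            V (g - g₁) (Iᶜ.card + 1) (tupIns (y : ℂ) (cplx (Fin.tail L)) Iᶜ) *
            ((Hsu (x + y) (L 0) : ℝ) : ℂ) * (x : ℂ) * (y : ℂ)
        else 0)
    + ∑ j : Fin m,
        ∫ x in Set.Ioi (0 : ℝ),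
          V g (({j}ᶜ : Finset (Fin m)).card + 1)
            (tupIns (x : ℂ) (cplx (Fin.tail L)) ({j}ᶜ : Finset (Fin m))) *
          ((Hsu x (L 0 + L j.succ) + Hsu x (L 0 - L j.succ) : ℝ) : ℂ) * (x : ℂ)

/-- A Stanford–Witten family: real polynomials `V^{su}_{g,n}` (`g ≥ 1`, `n ≥ 1`),
symmetric and even in each variable, with `V^{su}_{1,1} = 1/8`, satisfying the
Stanford–Witten recursion. -/
structure SWFamily where
  V : (g n : ℕ) → MvPolynomial (Fin n) ℝ
  symm : ∀ g n, 1 ≤ g → 1 ≤ n → ∀ (σ : Equiv.Perm (Fin n)) (z : Fin n → ℂ),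
    ev (V g n) (z ∘ σ) = ev (V g n) z
  even : ∀ g n, 1 ≤ g → 1 ≤ n → ∀ (i : Fin n) (z : Fin n → ℂ),
    ev (V g n) (Function.update z i (-(z i))) = ev (V g n) z
  v11 : ∀ z : Fin 1 → ℂ, ev (V 1 1) z = 1 / 8
  recur : ∀ g m, 1 ≤ g → ¬(g = 1 ∧ m = 0) → ∀ L : Fin (m + 1) → ℝ,
    SWEq (fun g' n' => ev (V g' n')) g m L

/-- The new super recursion (★★) at `(g, n) = (g, m+1)`; the first term is omitted
when `g = 1`, and in the splitting sum `g₁, g₂ ≥ 1`. -/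
def SStarEq (V : (g n : ℕ) → (Fin n → ℂ) → ℂ) (g m : ℕ) (L : Fin (m + 1) → ℂ) : Prop :=
  (L 0 + 2 * (π : ℂ) * Complex.I) *
      V g (m + 1) (Fin.cons (L 0 + 2 * (π : ℂ) * Complex.I) (Fin.tail L)) +
    (L 0 - 2 * (π : ℂ) * Complex.I) *
      V g (m + 1) (Fin.cons (L 0 - 2 * (π : ℂ) * Complex.I) (Fin.tail L)) =
    (if 2 ≤ g then
      -(1 / 2 : ℂ) * pInt (fun x =>
        V (g - 1) (m + 2) (Fin.cons x (Fin.cons (L 0 - x) (Fin.tail L))) * x * (L 0 - x)) (L 0)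
    else 0)
    - (1 / 2 : ℂ) * ∑ g₁ ∈ Finset.range (g + 1),
        ∑ I ∈ (Finset.univ : Finset (Fin m)).powerset,
        (if 1 ≤ g₁ ∧ 1 ≤ g - g₁ then
          pInt (fun x =>
            V g₁ (I.card + 1) (tupIns x (Fin.tail L) I) *
            V (g - g₁) (Iᶜ.card + 1) (tupIns (L 0 - x) (Fin.tail L) Iᶜ) * x * (L 0 - x)) (L 0)
        else 0)
    - ∑ j : Fin m,
        ((L 0 + L j.succ) * V g (({j}ᶜ : Finset (Fin m)).card + 1)
            (tupIns (L 0 + L j.succ) (Fin.tail L) ({j}ᶜ : Finset (Fin m)))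
         + (L 0 - L j.succ) * V g (({j}ᶜ : Finset (Fin m)).card + 1)
            (tupIns (L 0 - L j.succ) (Fin.tail L) ({j}ᶜ : Finset (Fin m))))

/-! ### Polynomial functions -/

/-- Polynomial functions on a complex normed space: the algebra of functions generated by the
constants and the continuous linear functionals. -/
inductive PolyMap {E : Type*} [NormedAddCommGroup E] [NormedSpace ℂ E] : (E → ℂ) → Prop
  | const (c : ℂ) : PolyMap fun _ => c
  | lin (l : E →L[ℂ] ℂ) : PolyMap fun z => l z
  | add {f g : E → ℂ} : PolyMap f → PolyMap g → PolyMap fun z => f z + g z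
  | mul {f g : E → ℂ} : PolyMap f → PolyMap g → PolyMap fun z => f z * g z

namespace PolyMap

variable {E F : Type*} [NormedAddCommGroup E] [NormedSpace ℂ E]
  [NormedAddCommGroup F] [NormedSpace ℂ F]

lemma neg {f : E → ℂ} (hf : PolyMap f) : PolyMap fun z => -f z := by
  simpa using (PolyMap.const (-1)).mul hf

lemma sub {f g : E → ℂ} (hf : PolyMap f) (hg : PolyMap g) : PolyMap fun z => f z - g z := by
  simpa [sub_eq_add_neg] using hf.add hg.neg

lemma sum {ι : Type*} {s : Finset ι} {f : ι → E → ℂ} (hf : ∀ i ∈ s, PolyMap (f i)) :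
    PolyMap fun z => ∑ i ∈ s, f i z := by
  classical
  induction s using Finset.induction_on with
  | empty => simpa using PolyMap.const (E := E) 0
  | insert a s ha ih =>
    simp only [Finset.sum_insert ha]
    exact (hf a (Finset.mem_insert_self a s)).add
      (ih fun i hi => hf i (Finset.mem_insert_of_mem hi))

lemma ite {p : Prop} [Decidable p] {f : E → ℂ} (hf : p → PolyMap f) :
    PolyMap fun z => if p then f z else 0 := by
  by_cases h : p
  · simpa [h] using hf h
  · simpa [h] using PolyMap.const (E := E) 0

lemma id : PolyMap fun z : ℂ => z := PolyMap.lin (ContinuousLinearMap.id ℂ ℂ)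

lemma fst : PolyMap fun z : ℂ × E => z.1 := PolyMap.lin (ContinuousLinearMap.fst ℂ ℂ E)

lemma snd : PolyMap fun z : E × ℂ => z.2 := PolyMap.lin (ContinuousLinearMap.snd ℂ E ℂ)

lemma proj {n : ℕ} (i : Fin n) : PolyMap fun z : Fin n → ℂ => z i :=
  PolyMap.lin (ContinuousLinearMap.proj (R := ℂ) (φ := fun _ : Fin n => ℂ) i)

lemma comp {f : E → ℂ} (hf : PolyMap f) {g : F → E}
    (hg : ∀ l : E →L[ℂ] ℂ, PolyMap fun z => l (g z)) : PolyMap fun z => f (g z) := by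
  induction hf with
  | const c => exact .const c
  | lin l => exact hg l
  | add _ _ h1 h2 => exact h1.add h2
  | mul _ _ h1 h2 => exact h1.mul h2

lemma comp_one {f : ℂ → ℂ} (hf : PolyMap f) {a : F → ℂ} (ha : PolyMap a) :
    PolyMap fun z => f (a z) := by
  refine hf.comp fun l => ?_
  have : ∀ z, l (a z) = a z * l 1 := fun z => by
    rw [← smul_eq_mul, ← map_smul]; simp
  simp only [this]
  exact ha.mul (.const _)

lemma comp_two {f : ℂ × ℂ → ℂ} (hf : PolyMap f) {a b : F → ℂ} (ha : PolyMap a) (hb : PolyMap b) :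
    PolyMap fun z => f (a z, b z) := by
  refine hf.comp fun l => ?_
  have : ∀ z, l (a z, b z) = a z * l (1, 0) + b z * l (0, 1) := fun z => by
    rw [← smul_eq_mul, ← smul_eq_mul, ← map_smul, ← map_smul, ← map_add]; simp
  simp only [this]
  exact (ha.mul (.const _)).add (hb.mul (.const _))

lemma comp_snd {f : E → ℂ} (hf : PolyMap f) : PolyMap fun z : F × E => f z.2 :=
  hf.comp fun l => .lin (l.comp (ContinuousLinearMap.snd ℂ F E))

lemma ev {n : ℕ} (p : MvPolynomial (Fin n) ℝ) {g : E → Fin n → ℂ}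
    (hg : ∀ i, PolyMap fun z => g z i) : PolyMap fun z => _root_.ev p (g z) := by
  unfold _root_.ev
  induction p using MvPolynomial.induction_on with
  | C a => simpa using PolyMap.const (E := E) (a : ℂ)
  | add p q hp hq => simpa using hp.add hq
  | mul_X p i hp => simpa using hp.mul (hg i)

lemma differentiable {f : E → ℂ} (hf : PolyMap f) : Differentiable ℂ f := by
  induction hf with
  | const c => fun_prop
  | lin l => fun_prop
  | add _ _ h1 h2 => fun_prop
  | mul _ _ h1 h2 => fun_prop

lemma continuous {f : E → ℂ} (hf : PolyMap f) : Continuous f := hf.differentiable.continuous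

/-- A polynomial function grows more slowly than every exponential. -/
lemma bound {f : E → ℂ} (hf : PolyMap f) :
    ∀ ε : ℝ, 0 < ε → ∃ C, 0 ≤ C ∧ ∀ z, ‖f z‖ ≤ C * Real.exp (ε * ‖z‖) := by
  induction hf with
  | const c =>
    intro ε hε
    refine ⟨‖c‖, norm_nonneg _, fun z => le_mul_of_one_le_right (norm_nonneg _) ?_⟩
    exact Real.one_le_exp (by positivity)
  | lin l =>
    intro ε hε
    refine ⟨‖l‖ / ε, by positivity, fun z => (l.le_opNorm z).trans ?_⟩
    have h1 := Real.add_one_le_exp (ε * ‖z‖)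
    have : ‖l‖ * ‖z‖ = ‖l‖ / ε * (ε * ‖z‖) := by field_simp
    rw [this]
    gcongr
    linarith
  | add _ _ h1 h2 =>
    intro ε hε
    obtain ⟨C, hC, h1⟩ := h1 ε hε
    obtain ⟨D, hD, h2⟩ := h2 ε hε
    refine ⟨C + D, by positivity, fun z => (norm_add_le _ _).trans ?_⟩
    linarith [h1 z, h2 z]
  | mul _ _ h1 h2 =>
    intro ε hε
    obtain ⟨C, hC, h1⟩ := h1 (ε / 2) (by positivity)
    obtain ⟨D, hD, h2⟩ := h2 (ε / 2) (by positivity)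
    refine ⟨C * D, by positivity, fun z => ?_⟩
    rw [norm_mul]
    calc _ ≤ (C * Real.exp (ε / 2 * ‖z‖)) * (D * Real.exp (ε / 2 * ‖z‖)) := by
          gcongr
          exacts [h1 z, h2 z]
      _ = _ := by
          have : ε * ‖z‖ = ε / 2 * ‖z‖ + ε / 2 * ‖z‖ := by ring
          rw [this, Real.exp_add]; ring

/-- Collecting powers of one distinguished variable. -/
lemma exists_coeff {f : ℂ × E → ℂ} (hf : PolyMap f) :
    ∃ p : Polynomial (E → ℂ), (∀ k, PolyMap (p.coeff k)) ∧
      ∀ x z, f (x, z) = (p.map (Pi.evalRingHom (fun _ : E => ℂ) z)).eval x := by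
  induction hf with
  | const c =>
    refine ⟨Polynomial.C fun _ => c, fun k => ?_, fun x z => by simp⟩
    rw [Polynomial.coeff_C]
    split_ifs
    exacts [.const c, .const 0]
  | lin l =>
    refine ⟨Polynomial.C (fun z => l (0, z)) + Polynomial.C (fun _ => l (1, 0)) * Polynomial.X,
      fun k => ?_, fun x z => ?_⟩
    · rw [Polynomial.coeff_add, Polynomial.coeff_C, Polynomial.coeff_C_mul_X]
      have h0 : PolyMap fun z : E => l (0, z) :=
        .lin (l.comp (ContinuousLinearMap.inr ℂ ℂ E))
      refine PolyMap.add (f := if k = 0 then _ else 0) (g := if k = 1 then _ else 0) ?_ ?_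
      · split_ifs
        exacts [h0, .const 0]
      · split_ifs
        exacts [.const _, .const 0]
    · simp only [Polynomial.map_add, Polynomial.map_mul, Polynomial.map_C, Polynomial.map_X,
        Polynomial.eval_add, Polynomial.eval_mul, Polynomial.eval_C, Polynomial.eval_X,
        Pi.evalRingHom_apply]
      have : ((x, z) : ℂ × E) = (0, z) + x • (1, 0) := by simp
      rw [this, map_add, map_smul, smul_eq_mul, mul_comm]
  | add _ _ h1 h2 =>
    obtain ⟨p, hp, h1⟩ := h1
    obtain ⟨q, hq, h2⟩ := h2
    refine ⟨p + q, fun k => ?_, fun x z => by simp [h1, h2]⟩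
    rw [Polynomial.coeff_add]
    exact (hp k).add (hq k)
  | mul _ _ h1 h2 =>
    obtain ⟨p, hp, h1⟩ := h1
    obtain ⟨q, hq, h2⟩ := h2
    refine ⟨p * q, fun k => ?_, fun x z => by simp [h1, h2]⟩
    rw [Polynomial.coeff_mul]
    have := PolyMap.sum (s := Finset.HasAntidiagonal.antidiagonal k)
      (f := fun i => fun z => p.coeff i.1 z * q.coeff i.2 z)
      fun i _ => (hp i.1).mul (hq i.2)
    convert this using 1
    ext z
    simp

/-- Integrating out one variable of a polynomial function, against a weight with finite moments,
leaves a polynomial function of the remaining variables. -/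
lemma integral {f : ℂ × E → ℂ} (hf : PolyMap f) {μ : Measure ℝ} {w : ℝ → ℂ}
    (hw : ∀ k : ℕ, Integrable (fun x : ℝ => (x : ℂ) ^ k * w x) μ) :
    PolyMap fun z => ∫ x : ℝ, f ((x : ℂ), z) * w x ∂μ := by
  obtain ⟨p, hp, h⟩ := hf.exists_coeff
  have key : ∀ z, ∫ x : ℝ, f ((x : ℂ), z) * w x ∂μ =
      ∑ k ∈ Finset.range (p.natDegree + 1),
        p.coeff k z * ∫ x : ℝ, (x : ℂ) ^ k * w x ∂μ := by
    intro z
    simp_rw [← integral_const_mul]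
    rw [← integral_finsetSum _ fun k _ => (hw k).const_mul _]
    congr 1
    ext x
    rw [h, Polynomial.eval_eq_sum_range' (n := p.natDegree + 1)
      (Nat.lt_succ_of_le Polynomial.natDegree_map_le), Finset.sum_mul]
    simp [mul_assoc]
  simp only [key]
  exact sum fun k _ => (hp k).mul (.const _)

/-- A polynomial function on `ℂⁿ` vanishing on `ℝⁿ` vanishes. -/
lemma eq_zero_of_real {n : ℕ} {f : (Fin n → ℂ) → ℂ} (hf : PolyMap f)
    (h : ∀ L : Fin n → ℝ, f (cplx L) = 0) (z : Fin n → ℂ) : f z = 0 := by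
  have : ∃ p : MvPolynomial (Fin n) ℂ, ∀ z, f z = MvPolynomial.eval z p := by
    clear h z
    induction hf with
    | const c => exact ⟨MvPolynomial.C c, fun z => by simp⟩
    | lin l =>
      refine ⟨∑ i, MvPolynomial.C (l (Pi.single i 1)) * MvPolynomial.X i, fun z => ?_⟩
      conv_lhs => rw [pi_eq_sum_univ' z]
      simp [mul_comm]
    | add _ _ h1 h2 =>
      obtain ⟨p, hp⟩ := h1
      obtain ⟨q, hq⟩ := h2
      exact ⟨p + q, fun z => by simp [hp, hq]⟩
    | mul _ _ h1 h2 =>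
      obtain ⟨p, hp⟩ := h1
      obtain ⟨q, hq⟩ := h2
      exact ⟨p * q, fun z => by simp [hp, hq]⟩
  obtain ⟨p, hp⟩ := this
  have hinf : (Set.range ((↑) : ℝ → ℂ)).Infinite :=
    Set.infinite_range_of_injective Complex.ofReal_injective
  have hp0 : p = 0 := by
    refine MvPolynomial.funext_set (fun _ => Set.range ((↑) : ℝ → ℂ)) (fun _ => hinf)
      fun x hx => ?_
    choose L hL using fun i => hx i (Set.mem_univ i)
    have : x = cplx L := funext fun i => (hL i).symm
    rw [this, ← hp, h, map_zero]
  rw [hp, hp0, map_zero]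

lemma eq_zero_of_real_one {f : ℂ → ℂ} (hf : PolyMap f) (h : ∀ t : ℝ, f t = 0) (z : ℂ) :
    f z = 0 := by
  have := eq_zero_of_real (n := 1) (f := fun v => f (v 0)) (hf.comp_one (proj 0))
    (fun L => h (L 0)) fun _ => z
  exact this

end PolyMap

lemma polyMap_pInt {E : Type*} [NormedAddCommGroup E] [NormedSpace ℂ E] {f : ℂ → E → ℂ}
    {a : E → ℂ} (ha : PolyMap a) (hf : PolyMap fun p : ℂ × E => f (p.1 * a p.2) p.2) :
    PolyMap fun z => pInt (fun x => f x z) (a z) := by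
  have := ha.mul (hf.integral (μ := volume.restrict (Set.Ioc 0 1)) (w := fun _ => 1) fun k => ?_)
  · simpa [pInt, intervalIntegral.integral_of_le] using this
  · refine Continuous.integrableOn_Ioc ?_
    fun_prop

/-! ### The kernel `1 / cosh (x / 4)` -/

lemma one_div_cosh_le (x : ℝ) : 1 / Real.cosh (x / 4) ≤ 2 * Real.exp (-(1 / 4) * |x|) := by
  rw [← Real.cosh_abs, div_le_iff₀ (Real.cosh_pos _), Real.cosh_eq]
  have h1 := Real.exp_pos (-(|x / 4|))
  have h2 : Real.exp (-(1 / 4) * |x|) * Real.exp |x / 4| = 1 := by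
    rw [← Real.exp_add, abs_div, abs_of_pos (by norm_num : (0 : ℝ) < 4)]
    ring_nf
    exact Real.exp_zero
  have h3 := Real.exp_pos (-(1 / 4) * |x|)
  nlinarith [mul_pos h1 h3]

lemma integrable_exp_neg_abs {c : ℝ} (hc : 0 < c) :
    Integrable fun x : ℝ => Real.exp (-c * |x|) := by
  have h1 : IntegrableOn (fun x : ℝ => Real.exp (-c * |x|)) (Set.Ioi 0) :=
    (integrableOn_exp_mul_Ioi (a := -c) (by linarith) 0).congr_fun
      (fun x hx => by simp only [abs_of_pos (Set.mem_Ioi.mp hx)]) measurableSet_Ioi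
  have h2 : IntegrableOn (fun x : ℝ => Real.exp (-c * |x|)) (Set.Iic 0) :=
    (integrableOn_exp_mul_Iic (a := c) hc 0).congr_fun
      (fun x hx => by simp only [abs_of_nonpos (Set.mem_Iic.mp hx)]; ring_nf) measurableSet_Iic
  have := h2.union h1
  rwa [Set.Iic_union_Ioi, integrableOn_univ] at this

lemma continuous_sech (a : ℝ) :
    Continuous fun x : ℝ => ((1 / Real.cosh ((x + a) / 4) : ℝ) : ℂ) := by
  refine Complex.continuous_ofReal.comp (continuous_const.div ?_ fun x => (Real.cosh_pos _).ne')
  fun_prop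

lemma PolyMap.integrable_sech {f : ℂ → ℂ} (hf : PolyMap f) :
    Integrable fun x : ℝ => f x * ((1 / Real.cosh (x / 4) : ℝ) : ℂ) := by
  obtain ⟨C, hC, h⟩ := hf.bound (1 / 8) (by norm_num)
  refine ((integrable_exp_neg_abs (c := 1 / 8) (by norm_num)).const_mul (C * 2)).mono'
    ?_ (Eventually.of_forall fun x => ?_)
  · refine Continuous.aestronglyMeasurable ?_
    have := continuous_sech 0
    simp only [add_zero] at this
    exact (hf.continuous.comp Complex.continuous_ofReal).mul this
  · rw [norm_mul, Complex.norm_real, Real.norm_of_nonneg (by positivity)]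
    have h1 := h x
    rw [Complex.norm_real, Real.norm_eq_abs] at h1
    calc _ ≤ (C * Real.exp (1 / 8 * |x|)) * (2 * Real.exp (-(1 / 4) * |x|)) := by
          gcongr
          exact one_div_cosh_le x
      _ = _ := by
          have : -(1 / 8) * |x| = 1 / 8 * |x| + -(1 / 4) * |x| := by ring
          rw [this, Real.exp_add]; ring

lemma PolyMap.shift {f : ℂ → ℂ} (hf : PolyMap f) (z : ℂ) : PolyMap fun x : ℂ => f (x + z) :=
  hf.comp_one (PolyMap.id.add (.const z))

/-- The transform `f ↦ ∫ f (x + z) / cosh (x / 4) dx`. On polynomials it is the operator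
`4π / cos (2π d/dz)`. -/
def sechTr (f : ℂ → ℂ) (z : ℂ) : ℂ :=
  ∫ x : ℝ, f (x + z) * ((1 / Real.cosh (x / 4) : ℝ) : ℂ)

lemma PolyMap.sechTr {f : ℂ → ℂ} (hf : PolyMap f) : PolyMap (sechTr f) := by
  have h : PolyMap fun p : ℂ × ℂ => f (p.1 + p.2) := hf.comp_one (PolyMap.fst.add PolyMap.snd)
  refine h.integral (μ := volume) (w := fun x => ((1 / Real.cosh (x / 4) : ℝ) : ℂ)) fun k => ?_
  have hk : PolyMap fun x : ℂ => x ^ k := by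
    induction k with
    | zero => simpa using PolyMap.const (E := ℂ) 1
    | succ k ih => simpa [pow_succ] using ih.mul PolyMap.id
  exact hk.integrable_sech

lemma integral_sech : ∫ x : ℝ, 1 / Real.cosh (x / 4) = 4 * π := by
  have hd : ∀ x : ℝ, HasDerivAt (fun x => 8 * Real.arctan (Real.exp (x / 4)))
      (1 / Real.cosh (x / 4)) x := fun x => by
    have h := ((((hasDerivAt_id x).div_const 4).exp).arctan).const_mul 8
    simp only [id] at h
    refine h.congr_deriv ?_
    rw [Real.cosh_eq, Real.exp_neg]
    have := Real.exp_pos (x / 4)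
    field_simp
    ring
  have hi : Integrable fun x : ℝ => 1 / Real.cosh (x / 4) := by
    have := (PolyMap.const (E := ℂ) 1).integrable_sech
    refine this.re.congr (Eventually.of_forall fun x => ?_)
    simp only [one_mul]
    exact Complex.ofReal_re _
  have h4 : Tendsto (fun x : ℝ => x / 4) atTop atTop := tendsto_id.atTop_div_const (by norm_num)
  have h4' : Tendsto (fun x : ℝ => x / 4) atBot atBot := tendsto_id.atBot_div_const (by norm_num)
  have hb : Tendsto (fun x => 8 * Real.arctan (Real.exp (x / 4))) atBot (𝓝 (8 * 0)) := by
    refine Tendsto.const_mul 8 ?_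
    have := (Real.continuous_arctan.tendsto 0).comp (Real.tendsto_exp_atBot.comp h4')
    rwa [Real.arctan_zero] at this
  have ht : Tendsto (fun x => 8 * Real.arctan (Real.exp (x / 4))) atTop (𝓝 (8 * (π / 2))) := by
    refine Tendsto.const_mul 8 ?_
    exact (tendsto_nhds_of_tendsto_nhdsWithin Real.tendsto_arctan_atTop).comp
      (Real.tendsto_exp_atTop.comp h4)
  rw [integral_of_hasDerivAt_of_tendsto hd hi hb ht]
  ring

/-- The residue computation in the removable case: if `f 0 = 0` then `f z / sinh (z / 4)` is
holomorphic on the strip `|Im z| ≤ 2π`, and its integrals over the two boundary lines agree. -/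
lemma integral_shift_of_zero {f : ℂ → ℂ} (hf : PolyMap f) (h0 : f 0 = 0) :
    ∫ x : ℝ, (f (x + 2 * π * Complex.I) + f (x - 2 * π * Complex.I)) *
      ((1 / Real.cosh (x / 4) : ℝ) : ℂ) = 0 := by
  set D : ℂ → ℂ := fun z => Complex.sinh (z / 4) with hD
  have hDd : ∀ z, HasDerivAt D (Complex.cosh (z / 4) * (1 / 4)) z := fun z =>
    ((hasDerivAt_id z).div_const 4).csinh
  have hDdiff : Differentiable ℂ D := fun z => (hDd z).differentiableAt
  set φ : ℂ → ℂ := fun z => dslope f 0 z / dslope D 0 z with hφ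
  have hφne : ∀ z, z ≠ 0 → φ z = f z / D z := fun z hz => by
    simp only [hφ, dslope_of_ne _ hz, slope_def_field, h0]
    have : D 0 = 0 := by simp [hD]
    rw [this, sub_zero, sub_zero, sub_zero, div_div_div_cancel_right₀ hz]
  have hsinh : ∀ z : ℂ, D z = 0 → |z.im| ≤ 2 * π → z = 0 := by
    intro z hz him
    have h1 : Complex.sin (z / 4 * Complex.I) = 0 := by
      rw [Complex.sin_mul_I]
      simp only [hD] at hz
      rw [hz, zero_mul]
    obtain ⟨k, hk⟩ := Complex.sin_eq_zero_iff.mp h1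
    have hz' : z = -(4 * k * π) * Complex.I := by
      have : z = -(4 * (z / 4 * Complex.I)) * Complex.I := by
        linear_combination z * Complex.I_sq
      rw [this, hk]; ring
    have him' : z.im = -(4 * k * π) := by
      rw [hz']; simp
    have hk0 : k = 0 := by
      by_contra hk0
      have : (1 : ℝ) ≤ |(k : ℝ)| := by
        exact_mod_cast Int.one_le_abs hk0
      rw [him', abs_neg, abs_mul, abs_mul, abs_of_pos Real.pi_pos] at him
      norm_num at him
      nlinarith [Real.pi_pos]
    rw [hz', hk0]; simp
  have hφdiff : ∀ z : ℂ, |z.im| ≤ 2 * π → DifferentiableAt ℂ φ z := by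
    intro z hz
    have e1 : DifferentiableAt ℂ (dslope f 0) z := by
      have := (Complex.differentiableOn_dslope (s := Set.univ) (c := 0) univ_mem).mpr
        hf.differentiable.differentiableOn
      exact (this z trivial).differentiableAt univ_mem
    have e2 : DifferentiableAt ℂ (dslope D 0) z := by
      have := (Complex.differentiableOn_dslope (s := Set.univ) (c := 0) univ_mem).mpr
        hDdiff.differentiableOn
      exact (this z trivial).differentiableAt univ_mem
    refine e1.div e2 ?_
    by_cases hz0 : z = 0
    · rw [hz0, dslope_same, (hDd 0).deriv]; simp
    · rw [dslope_of_ne _ hz0, slope_def_field]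
      have : D 0 = 0 := by simp [hD]
      rw [this, sub_zero, sub_zero]
      exact div_ne_zero (fun h => hz0 (hsinh z h hz)) hz0
  have hpi := Real.pi_pos
  -- the boundary values, where `sinh ((x ± 2πi) / 4) = ± i cosh (x / 4)`
  have hup : ∀ x : ℝ, φ (x + (2 * π : ℝ) * Complex.I) =
      -Complex.I * (f (x + 2 * π * Complex.I) * ((1 / Real.cosh (x / 4) : ℝ) : ℂ)) := by
    intro x
    have hc : (Real.cosh (x / 4) : ℂ) ≠ 0 := by exact_mod_cast (Real.cosh_pos _).ne'
    rw [hφne _ fun h => by simpa [hpi.ne'] using congrArg Complex.im h]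
    have : D (x + (2 * π : ℝ) * Complex.I) = Complex.I * Real.cosh (x / 4) := by
      simp only [hD]
      have e : ((x : ℂ) + (2 * π : ℝ) * Complex.I) / 4 = (x / 4 : ℝ) + (π / 2 : ℂ) * Complex.I := by
        push_cast; ring
      rw [e, Complex.sinh_add, Complex.sinh_mul_I, Complex.cosh_mul_I, Complex.cos_pi_div_two,
        Complex.sin_pi_div_two, ← Complex.ofReal_cosh]
      ring
    rw [this]
    push_cast at hc ⊢
    field_simp
    linear_combination (f (x + 2 * π * Complex.I)) * Complex.I_sq
  have hdown : ∀ x : ℝ, φ (x + (-(2 * π) : ℝ) * Complex.I) =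
      Complex.I * (f (x - 2 * π * Complex.I) * ((1 / Real.cosh (x / 4) : ℝ) : ℂ)) := by
    intro x
    have hc : (Real.cosh (x / 4) : ℂ) ≠ 0 := by exact_mod_cast (Real.cosh_pos _).ne'
    rw [hφne _ fun h => by simpa [hpi.ne'] using congrArg Complex.im h]
    have : D (x + (-(2 * π) : ℝ) * Complex.I) = -Complex.I * Real.cosh (x / 4) := by
      simp only [hD]
      have e : ((x : ℂ) + (-(2 * π) : ℝ) * Complex.I) / 4
          = (x / 4 : ℝ) + (-(π / 2 : ℂ)) * Complex.I := by
        push_cast; ring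
      rw [e, Complex.sinh_add, Complex.sinh_mul_I, Complex.cosh_mul_I, Complex.cos_neg,
        Complex.sin_neg, Complex.cos_pi_div_two,
        Complex.sin_pi_div_two, ← Complex.ofReal_cosh]
      ring
    have e2 : (x : ℂ) + (-(2 * π) : ℝ) * Complex.I = x - 2 * π * Complex.I := by push_cast; ring
    rw [this, e2]
    push_cast at hc ⊢
    field_simp
    linear_combination (-f (x - 2 * π * Complex.I)) * Complex.I_sq
  -- decay of the vertical sides
  obtain ⟨C, hC, hbd⟩ := hf.bound (1 / 8) (by norm_num)
  have hside : ∀ R : ℝ, 1 ≤ |R| → ∀ y ∈ Set.uIoc (-(2 * π)) (2 * π),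
      ‖φ (R + y * Complex.I)‖ ≤
        C * Real.exp (1 / 8 * (|R| + 2 * π)) / Real.sinh (|R| / 4) := by
    intro R hR y hy
    rw [Set.uIoc_of_le (by linarith)] at hy
    have hy' : |y| ≤ 2 * π := abs_le.mpr ⟨hy.1.le, hy.2⟩
    have hR0 : R ≠ 0 := fun h => by simp [h] at hR; linarith
    rw [hφne _ fun h => by simpa [hR0] using congrArg Complex.re h, norm_div]
    have hn : ‖(R + y * Complex.I : ℂ)‖ ≤ |R| + 2 * π := by
      refine (norm_add_le _ _).trans ?_
      simpa using hy'
    have hs : 0 < Real.sinh (|R| / 4) := Real.sinh_pos_iff.mpr (by linarith)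
    have hD' : Real.sinh (|R| / 4) ≤ ‖D (R + y * Complex.I)‖ := by
      have e : Real.sinh (|R| / 4) = |Real.sinh (R / 4)| := by
        rw [Real.abs_sinh, abs_div, abs_of_pos (by norm_num : (0 : ℝ) < 4)]
      have e2 := abs_norm_sub_norm_le (Complex.exp ((R + y * Complex.I) / 4))
        (Complex.exp (-((R + y * Complex.I) / 4)))
      rw [Complex.norm_exp, Complex.norm_exp] at e2
      have e3 : ((R + y * Complex.I : ℂ) / 4).re = R / 4 := by simp
      rw [Complex.neg_re, e3] at e2
      simp only [hD, Complex.sinh, norm_div, Complex.norm_ofNat]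
      rw [e, Real.sinh_eq, abs_div, abs_two]
      gcongr
    gcongr
    refine (hbd _).trans ?_
    gcongr
  have hlim : Tendsto (fun R : ℝ => C * Real.exp (1 / 8 * (|R| + 2 * π)) / Real.sinh (|R| / 4))
      atTop (𝓝 0) := by
    have e1 : Tendsto (fun R : ℝ => Real.exp (-(1 / 8 * R))) atTop (𝓝 0) :=
      Real.tendsto_exp_neg_atTop_nhds_zero.comp
        (tendsto_id.const_mul_atTop (by norm_num : (0 : ℝ) < 1 / 8))
    have e2 := e1.const_mul (C * Real.exp (1 / 8 * (2 * π)) * 4)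
    rw [mul_zero] at e2
    refine squeeze_zero' ?_ ?_ e2
    · filter_upwards [eventually_ge_atTop 4] with R hR
      have : 0 < Real.sinh (|R| / 4) := Real.sinh_pos_iff.mpr (by positivity)
      positivity
    · filter_upwards [eventually_ge_atTop 4] with R hR
      rw [abs_of_pos (by linarith : (0 : ℝ) < R)]
      have hs : 0 < Real.sinh (R / 4) := Real.sinh_pos_iff.mpr (by linarith)
      rw [div_le_iff₀ hs]
      have a1 : Real.exp (1 / 8 * (R + 2 * π)) =
          Real.exp (1 / 8 * (2 * π)) * (Real.exp (-(1 / 8 * R)) * Real.exp (R / 4)) := by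
        rw [← Real.exp_add, ← Real.exp_add]; ring_nf
      have a2 : Real.exp (R / 4) ≤ 4 * Real.sinh (R / 4) := by
        rw [Real.sinh_eq]
        have b1 : Real.exp (-(R / 4)) ≤ 1 := Real.exp_le_one_iff.mpr (by linarith)
        have b2 := Real.add_one_le_exp (R / 4)
        linarith
      rw [a1]
      calc _ ≤ C * (Real.exp (1 / 8 * (2 * π)) *
            (Real.exp (-(1 / 8 * R)) * (4 * Real.sinh (R / 4)))) := by gcongr
        _ = _ := by ring
  have hs1 : ∀ s : ℝ, |s| = 1 → Tendsto (fun R : ℝ =>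
      ∫ y in (-(2 * π))..(2 * π), φ ((s * R : ℝ) + y * Complex.I)) atTop (𝓝 0) := by
    intro s hs
    have := hlim.mul_const |2 * π - -(2 * π)|
    rw [zero_mul] at this
    refine squeeze_zero_norm' ?_ this
    filter_upwards [eventually_ge_atTop 1] with R hR
    have hR' : |s * R| = |R| := by rw [abs_mul, hs, one_mul]
    have := intervalIntegral.norm_integral_le_of_norm_le_const
      (hside (s * R) (by rw [hR']; exact hR.trans (le_abs_self R)))
    rwa [hR'] at this
  have hI1 := (hf.shift (2 * π * Complex.I)).integrable_sech
  have hI2 := (hf.shift (-(2 * π * Complex.I))).integrable_sech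
  simp only [← sub_eq_add_neg] at hI2
  have t1 := intervalIntegral_tendsto_integral (hI1.const_mul (-Complex.I))
    tendsto_neg_atTop_atBot tendsto_id
  have t2 := intervalIntegral_tendsto_integral (hI2.const_mul Complex.I)
    tendsto_neg_atTop_atBot tendsto_id
  have T := ((t2.sub t1).add ((hs1 1 (by simp)).const_mul Complex.I)).sub
    ((hs1 (-1) (by simp)).const_mul Complex.I)
  have T0 := T.congr' (f₂ := fun _ => 0) ?_
  · have := tendsto_nhds_unique T0 tendsto_const_nhds
    rw [integral_const_mul, integral_const_mul] at this
    simp_rw [add_mul]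
    rw [integral_add hI1 hI2]
    have hI : Complex.I ≠ 0 := Complex.I_ne_zero
    apply mul_left_cancel₀ hI
    linear_combination this
  · filter_upwards with R
    have := Complex.integral_boundary_rect_eq_zero_of_differentiableOn φ
      ⟨-R, -(2 * π)⟩ ⟨R, 2 * π⟩ ?_
    · simp only [hup, hdown] at this
      simp only [smul_eq_mul] at this
      simpa using this
    · intro z hz
      refine (hφdiff z ?_).differentiableWithinAt
      have := hz.2
      simp only [Set.mem_preimage] at this
      rw [Set.uIcc_of_le (by linarith)] at this
      exact abs_le.mpr this

/-- The transform `sechTr` inverts `cos (2π d/dz)` up to the factor `4π`. -/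
lemma sechTr_shift {f : ℂ → ℂ} (hf : PolyMap f) (z : ℂ) :
    sechTr f (z + 2 * π * Complex.I) + sechTr f (z - 2 * π * Complex.I) = 8 * π * f z := by
  have h1 := (hf.shift (z + 2 * π * Complex.I)).integrable_sech
  have h2 := (hf.shift (z - 2 * π * Complex.I)).integrable_sech
  have h0 := integral_shift_of_zero (f := fun x => f (x + z) - f z)
    ((hf.shift z).sub (.const _)) (by simp)
  have hc := (PolyMap.const (E := ℂ) (2 * f z)).integrable_sech
  have hI : ∫ x : ℝ, 2 * f z * ((1 / Real.cosh (x / 4) : ℝ) : ℂ) = 8 * π * f z := by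
    rw [integral_const_mul, integral_complex_ofReal, integral_sech]
    push_cast; ring
  unfold sechTr
  rw [← integral_add h1 h2, ← hI, ← sub_eq_zero, ← integral_sub (by exact h1.add h2) hc, ← h0]
  congr 1
  ext x
  have e1 : (x : ℂ) + 2 * π * Complex.I + z = x + (z + 2 * π * Complex.I) := by ring
  have e2 : (x : ℂ) - 2 * π * Complex.I + z = x + (z - 2 * π * Complex.I) := by ring
  rw [e1, e2]
  ring

/-! ### Integrals against the super kernel -/

lemma continuous_Hsu (t : ℝ) : Continuous fun x : ℝ => ((Hsu x t : ℝ) : ℂ) := by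
  have := ((continuous_sech t).sub (continuous_sech (-t))).div_const 2
  simpa [Hsu, sub_eq_add_neg] using this

lemma abs_Hsu_le (x t : ℝ) :
    |Hsu x t| ≤ 2 * Real.exp (1 / 4 * |t|) * Real.exp (-(1 / 4) * |x|) := by
  have h : ∀ s : ℝ, |s| = |t| → 1 / Real.cosh ((x + s) / 4) ≤
      2 * Real.exp (1 / 4 * |t|) * Real.exp (-(1 / 4) * |x|) := by
    intro s hs
    refine (one_div_cosh_le _).trans ?_
    rw [mul_assoc, ← Real.exp_add]
    gcongr
    have := abs_sub (x + s) s
    rw [add_sub_cancel_right] at this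
    linarith
  have h1 := h t rfl
  have h2 := h (-t) (abs_neg t)
  rw [← sub_eq_add_neg] at h2
  have p1 : 0 < 1 / Real.cosh ((x + t) / 4) := one_div_pos.mpr (Real.cosh_pos _)
  have p2 : 0 < 1 / Real.cosh ((x - t) / 4) := one_div_pos.mpr (Real.cosh_pos _)
  unfold Hsu
  rw [abs_le]
  constructor <;> linarith

lemma PolyMap.integrable_Hsu {f : ℂ → ℂ} (hf : PolyMap f) (t : ℝ) :
    Integrable fun x : ℝ => f x * ((Hsu x t : ℝ) : ℂ) := by
  have h : ∀ s : ℝ, Integrable fun x : ℝ => f x * ((1 / Real.cosh ((x + s) / 4) : ℝ) : ℂ) := by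
    intro s
    have := (hf.shift (-s)).integrable_sech.comp_add_right s
    simpa using this
  have := ((h t).sub (h (-t))).div_const 2
  refine this.congr (Eventually.of_forall fun x => ?_)
  simp only [Pi.sub_apply, Hsu, sub_eq_add_neg]
  push_cast
  ring

/-- For an odd polynomial the half-line integral against the super kernel unfolds to an integral
over the whole line. -/
lemma integral_Hsu {f : ℂ → ℂ} (hf : PolyMap f) (hodd : ∀ z, f (-z) = -f z) (t : ℝ) :
    ∫ x in Set.Ioi (0 : ℝ), f x * ((Hsu x t : ℝ) : ℂ) = -(1 / 2) * sechTr f t := by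
  have h : ∀ s : ℝ, Integrable fun x : ℝ => f x * ((1 / Real.cosh ((x + s) / 4) : ℝ) : ℂ) := by
    intro s
    have := (hf.shift (-s)).integrable_sech.comp_add_right s
    simpa using this
  have e1 : sechTr f t = ∫ x : ℝ, f x * ((1 / Real.cosh ((x + -t) / 4) : ℝ) : ℂ) := by
    rw [← integral_add_right_eq_self _ t]
    simp [sechTr]
  have e2 : ∫ x in Set.Iic (0 : ℝ), f x * ((1 / Real.cosh ((x + -t) / 4) : ℝ) : ℂ) =
      -∫ x in Set.Ioi (0 : ℝ), f x * ((1 / Real.cosh ((x + t) / 4) : ℝ) : ℂ) := by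
    rw [← neg_zero, ← integral_comp_neg_Ioi, neg_zero, ← integral_neg]
    congr 1
    ext x
    have : (-x + -t) / 4 = -((x + t) / 4) := by ring
    rw [Complex.ofReal_neg, hodd, this, Real.cosh_neg]
    ring
  rw [e1, ← intervalIntegral.integral_Iic_add_Ioi (h (-t)).integrableOn (h (-t)).integrableOn, e2]
  have e3 : ∀ x : ℝ, f x * ((Hsu x t : ℝ) : ℂ) =
      (1 / 2 : ℂ) * (f x * ((1 / Real.cosh ((x + t) / 4) : ℝ) : ℂ)
        - f x * ((1 / Real.cosh ((x + -t) / 4) : ℝ) : ℂ)) := by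
    intro x
    simp only [Hsu, sub_eq_add_neg]
    push_cast
    ring
  simp_rw [e3]
  rw [integral_const_mul, integral_sub (h t).integrableOn (h (-t)).integrableOn]
  ring

/-- Substituting `u = x + y` in the quadrant integral turns it into a half-line integral of the
convolution `u ↦ ∫₀ᵘ P (x, u - x) dx`. -/
lemma integral_integral_Hsu {P : ℂ × ℂ → ℂ} (hP : PolyMap P) (t : ℝ) :
    ∫ x in Set.Ioi (0 : ℝ), ∫ y in Set.Ioi (0 : ℝ),
      P ((x : ℂ), (y : ℂ)) * ((Hsu (x + y) t : ℝ) : ℂ) =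
    ∫ u in Set.Ioi (0 : ℝ), pInt (fun x => P (x, u - x)) u * ((Hsu u t : ℝ) : ℂ) := by
  set G : ℝ × ℝ → ℂ := fun p => P ((p.1 : ℂ), (p.2 : ℂ) - p.1) * ((Hsu p.2 t : ℝ) : ℂ) with hG
  set S : Set (ℝ × ℝ) := {p | 0 < p.1 ∧ p.1 < p.2} with hS
  have hSm : MeasurableSet S :=
    (measurableSet_lt measurable_const measurable_fst).inter
      (measurableSet_lt measurable_fst measurable_snd)
  have hGc : Continuous G := by
    refine (hP.continuous.comp (by fun_prop)).mul ((continuous_Hsu t).comp continuous_snd)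
  have hGint : Integrable (Function.uncurry fun x u => S.indicator G (x, u))
      ((volume : Measure ℝ).prod volume) := by
    obtain ⟨C, hC, hbd⟩ := hP.bound (1 / 8) (by norm_num)
    have hm := ((integrable_exp_neg_abs (c := 1 / 16) (by norm_num)).mul_prod
      (integrable_exp_neg_abs (c := 1 / 16) (by norm_num))).const_mul
        (C * (2 * Real.exp (1 / 4 * |t|)))
    refine hm.mono' (hGc.measurable.indicator hSm).aestronglyMeasurable
      (Eventually.of_forall fun p => ?_)
    obtain ⟨x, u⟩ := p
    simp only [Function.uncurry]
    by_cases hp : (x, u) ∈ S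
    · rw [Set.indicator_of_mem hp]
      have hx : 0 < x := hp.1
      have hu : x < u := hp.2
      simp only [hG]
      rw [norm_mul, Complex.norm_real, Real.norm_eq_abs]
      have h1 := hbd ((x : ℂ), (u : ℂ) - x)
      have h2 := abs_Hsu_le u t
      have hn : ‖(((x : ℂ), (u : ℂ) - x) : ℂ × ℂ)‖ ≤ u := by
        rw [Prod.norm_def]
        refine max_le ?_ ?_
        · rw [Complex.norm_real, Real.norm_of_nonneg hx.le]; exact hu.le
        · rw [← Complex.ofReal_sub]
          simp only [Complex.norm_real]
          rw [Real.norm_of_nonneg (by linarith)]; linarith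
      rw [abs_of_pos (hx.trans hu)] at h2
      rw [abs_of_pos (hx.trans hu), abs_of_pos hx]
      calc _ ≤ (C * Real.exp (1 / 8 * u)) *
            (2 * Real.exp (1 / 4 * |t|) * Real.exp (-(1 / 4) * u)) := by
            gcongr
            refine h1.trans ?_
            gcongr
        _ = C * (2 * Real.exp (1 / 4 * |t|)) * Real.exp (-(1 / 8) * u) := by
            have : -(1 / 8) * u = 1 / 8 * u + -(1 / 4) * u := by ring
            rw [this, Real.exp_add]; ring
        _ ≤ _ := by
            rw [← Real.exp_add]
            gcongr
            linarith
    · rw [Set.indicator_of_notMem hp, norm_zero]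
      positivity
  have hswap := integral_integral_swap hGint
  have hL : ∀ x : ℝ, ∫ u : ℝ, S.indicator G (x, u) =
      (Set.Ioi (0 : ℝ)).indicator (fun x : ℝ => ∫ y in Set.Ioi (0 : ℝ),
        P ((x : ℂ), (y : ℂ)) * ((Hsu (x + y) t : ℝ) : ℂ)) x := by
    intro x
    by_cases hx : 0 < x
    · rw [Set.indicator_of_mem (Set.mem_Ioi.mpr hx), ← integral_add_right_eq_self _ x,
        ← integral_indicator measurableSet_Ioi]
      congr 1
      ext y
      by_cases hy : 0 < y
      · rw [Set.indicator_of_mem (Set.mem_Ioi.mpr hy), Set.indicator_of_mem]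
        · simp [hG, add_comm y x]
        · exact ⟨hx, by simpa using hy⟩
      · rw [Set.indicator_of_notMem (s := S) fun h => hy (by simpa using h.2),
          Set.indicator_of_notMem (by simpa using hy)]
    · rw [Set.indicator_of_notMem (by simpa using hx)]
      have : ∀ u, S.indicator G (x, u) = 0 := fun u =>
        Set.indicator_of_notMem (fun h => hx h.1) _
      simp [this]
  have hR : ∀ u : ℝ, ∫ x : ℝ, S.indicator G (x, u) =
      (Set.Ioi (0 : ℝ)).indicator (fun u : ℝ =>
        pInt (fun x => P (x, u - x)) u * ((Hsu u t : ℝ) : ℂ)) u := by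
    intro u
    by_cases hu : 0 < u
    · rw [Set.indicator_of_mem (Set.mem_Ioi.mpr hu)]
      have e : ∀ x, S.indicator G (x, u) =
          (Set.Ioo 0 u).indicator (fun x => G (x, u)) x := by
        intro x
        by_cases hx : x ∈ Set.Ioo 0 u
        · rw [Set.indicator_of_mem hx, Set.indicator_of_mem (show (x, u) ∈ S from hx)]
        · rw [Set.indicator_of_notMem hx, Set.indicator_of_notMem (show (x, u) ∉ S from hx)]
      simp_rw [e]
      rw [integral_indicator measurableSet_Ioo, ← integral_Ioc_eq_integral_Ioo,
        ← intervalIntegral.integral_of_le hu.le]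
      simp only [hG]
      rw [intervalIntegral.integral_mul_const]
      congr 1
      have := intervalIntegral.smul_integral_comp_mul_right
        (a := 0) (b := 1) (fun x : ℝ => P ((x : ℂ), (u : ℂ) - x)) u
      simp only [zero_mul, one_mul] at this
      rw [← this, pInt]
      simp
    · rw [Set.indicator_of_notMem (by simpa using hu)]
      have : ∀ x, S.indicator G (x, u) = 0 := fun x =>
        Set.indicator_of_notMem (fun h => hu (h.1.trans h.2)) _
      simp [this]
  simp_rw [hL, hR] at hswap
  rwa [integral_indicator measurableSet_Ioi, integral_indicator measurableSet_Ioi] at hswap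

lemma PolyMap.conv {P : ℂ × ℂ → ℂ} (hP : PolyMap P) :
    PolyMap fun u : ℂ => pInt (fun x => P (x, u - x)) u := by
  refine polyMap_pInt (f := fun x u => P (x, u - x)) PolyMap.id ?_
  exact hP.comp_two (PolyMap.fst.mul PolyMap.snd)
    (PolyMap.snd.sub (PolyMap.fst.mul PolyMap.snd))

lemma integral_integral_Hsu_eq_sechTr {P : ℂ × ℂ → ℂ} (hP : PolyMap P)
    (heven : ∀ x y, P (-x, -y) = P (x, y)) (t : ℝ) :
    ∫ x in Set.Ioi (0 : ℝ), ∫ y in Set.Ioi (0 : ℝ),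
      P ((x : ℂ), (y : ℂ)) * ((Hsu (x + y) t : ℝ) : ℂ) =
    -(1 / 2) * sechTr (fun u => pInt (fun x => P (x, u - x)) u) t := by
  rw [integral_integral_Hsu hP, integral_Hsu hP.conv]
  intro u
  unfold pInt
  rw [neg_mul]
  congr 3
  ext s
  simp only
  rw [← heven]
  ring_nf

/-! ### The recursion -/

section Tuples

variable {E : Type*} [NormedAddCommGroup E] [NormedSpace ℂ E] {n : ℕ}

lemma PolyMap.cons {x : E → ℂ} {w : E → Fin n → ℂ} (hx : PolyMap x)
    (hw : ∀ i, PolyMap fun z => w z i) (i : Fin (n + 1)) :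
    PolyMap fun z => (Fin.cons (x z) (w z) : Fin (n + 1) → ℂ) i := by
  refine Fin.cases ?_ (fun i => ?_) i
  · simpa using hx
  · simpa using hw i

lemma PolyMap.tupIns {x : E → ℂ} {w : E → Fin n → ℂ} (hx : PolyMap x)
    (hw : ∀ i, PolyMap fun z => w z i) (I : Finset (Fin n)) (i : Fin (I.card + 1)) :
    PolyMap fun z => tupIns (x z) (w z) I i :=
  hx.cons (w := fun z i => w z ((I.orderIsoOfFin rfl) i).1) (fun _ => hw _) i

lemma PolyMap.ev_cons (p : MvPolynomial (Fin (n + 1)) ℝ) {x : E → ℂ} {w : E → Fin n → ℂ}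
    (hx : PolyMap x) (hw : ∀ i, PolyMap fun z => w z i) :
    PolyMap fun z => _root_.ev p (Fin.cons (x z) (w z) : Fin (n + 1) → ℂ) :=
  .ev p (hx.cons hw)

lemma PolyMap.ev_tupIns (I : Finset (Fin n)) (p : MvPolynomial (Fin (I.card + 1)) ℝ) {x : E → ℂ}
    {w : E → Fin n → ℂ} (hx : PolyMap x) (hw : ∀ i, PolyMap fun z => w z i) :
    PolyMap fun z => _root_.ev p (_root_.tupIns (x z) (w z) I) :=
  .ev p (hx.tupIns hw I)

lemma SWFamily.even_cons (F : SWFamily) {g : ℕ} (hg : 1 ≤ g) (x : ℂ) (w : Fin n → ℂ) :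
    ev (F.V g (n + 1)) (Fin.cons (-x) w) = ev (F.V g (n + 1)) (Fin.cons x w) := by
  have := F.even g (n + 1) hg (by omega) 0 (Fin.cons x w)
  rwa [Fin.update_cons_zero, Fin.cons_zero] at this

lemma SWFamily.even_tupIns (F : SWFamily) {g : ℕ} (hg : 1 ≤ g) (x : ℂ) (w : Fin n → ℂ)
    (I : Finset (Fin n)) :
    ev (F.V g (I.card + 1)) (tupIns (-x) w I) = ev (F.V g (I.card + 1)) (tupIns x w I) :=
  F.even_cons hg x _

lemma SWFamily.even_cons_cons (F : SWFamily) {g : ℕ} (hg : 1 ≤ g) (x y : ℂ) (w : Fin n → ℂ) :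
    ev (F.V g (n + 2)) (Fin.cons (-x) (Fin.cons (-y) w)) =
      ev (F.V g (n + 2)) (Fin.cons x (Fin.cons y w)) := by
  rw [F.even_cons hg]
  have := F.even g (n + 2) hg (by omega) (Fin.succ 0) (Fin.cons x (Fin.cons y w))
  rwa [← Fin.cons_update, Fin.update_cons_zero, Fin.cons_succ, Fin.cons_zero] at this

end Tuples

section Recursion

variable (F : SWFamily) (g m : ℕ)

/-- The convolution integral of `V_{g-1,n+1}` in the recursion, as a function of `L₁ = u` with the
remaining lengths `w` fixed. -/
def convGenus (w : Fin m → ℂ) (u : ℂ) : ℂ :=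
  pInt (fun x => ev (F.V (g - 1) (m + 2)) (Fin.cons x (Fin.cons (u - x) w)) * x * (u - x)) u

/-- The convolution integral of `V_{g₁,|I|+1}` and `V_{g-g₁,|Iᶜ|+1}` in the recursion, as a
function of `L₁ = u` with the remaining lengths `w` fixed. -/
def convSplit (w : Fin m → ℂ) (g₁ : ℕ) (I : Finset (Fin m)) (u : ℂ) : ℂ :=
  pInt (fun x => ev (F.V g₁ (I.card + 1)) (tupIns x w I) *
    ev (F.V (g - g₁) (Iᶜ.card + 1)) (tupIns (u - x) w Iᶜ) * x * (u - x)) u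

/-- The function `x V_{g,n-1}(x, …)`, with the `j`-th of the lengths `w` omitted. -/
def dropOne (w : Fin m → ℂ) (j : Fin m) (x : ℂ) : ℂ :=
  x * ev (F.V g (({j}ᶜ : Finset (Fin m)).card + 1)) (tupIns x w ({j}ᶜ : Finset (Fin m)))

variable {F g m}

lemma polyMap_genus (w : Fin m → ℂ) : PolyMap fun p : ℂ × ℂ =>
    ev (F.V (g - 1) (m + 2)) (Fin.cons p.1 (Fin.cons p.2 w)) * p.1 * p.2 :=
  ((PolyMap.ev _ (PolyMap.fst.cons (w := fun p : ℂ × ℂ => Fin.cons p.2 w)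
    (PolyMap.snd.cons (w := fun _ => w) fun _ => .const _))).mul .fst).mul .snd

lemma polyMap_split (w : Fin m → ℂ) (g₁ : ℕ) (I : Finset (Fin m)) : PolyMap fun p : ℂ × ℂ =>
    ev (F.V g₁ (I.card + 1)) (tupIns p.1 w I) *
      ev (F.V (g - g₁) (Iᶜ.card + 1)) (tupIns p.2 w Iᶜ) * p.1 * p.2 :=
  (((PolyMap.ev _ (PolyMap.fst.tupIns (w := fun _ => w) (fun _ => .const _) I)).mul
    (PolyMap.ev _ (PolyMap.snd.tupIns (w := fun _ => w) (fun _ => .const _) Iᶜ))).mul .fst).mul .snd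

lemma polyMap_convGenus (w : Fin m → ℂ) : PolyMap (convGenus F g m w) :=
  (polyMap_genus w).conv

lemma polyMap_convSplit (w : Fin m → ℂ) (g₁ : ℕ) (I : Finset (Fin m)) :
    PolyMap (convSplit F g m w g₁ I) :=
  (polyMap_split w g₁ I).conv

lemma polyMap_dropOne (w : Fin m → ℂ) (j : Fin m) : PolyMap (dropOne F g m w j) :=
  PolyMap.id.mul (PolyMap.ev _ (PolyMap.id.tupIns (w := fun _ => w) (fun _ => .const _) _))

/-- The Stanford–Witten recursion with every integral written as a transform `sechTr`. In this form
both sides are polynomial in the first length, so it holds for complex `z`. -/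
lemma sw_sechTr (hg : 1 ≤ g) (hgm : ¬(g = 1 ∧ m = 0)) (w : Fin m → ℝ) (z : ℂ) :
    4 * (π : ℂ) * z * ev (F.V g (m + 1)) (Fin.cons z (cplx w)) =
      (if 2 ≤ g then (1 / 2 : ℂ) * (-(1 / 2) * sechTr (convGenus F g m (cplx w)) z) else 0)
      + (1 / 2 : ℂ) * ∑ g₁ ∈ Finset.range (g + 1),
        ∑ I ∈ (Finset.univ : Finset (Fin m)).powerset,
          (if 1 ≤ g₁ ∧ 1 ≤ g - g₁ then
            -(1 / 2) * sechTr (convSplit F g m (cplx w) g₁ I) z else 0)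
      + ∑ j : Fin m, (-(1 / 2) * sechTr (dropOne F g m (cplx w) j) (z + w j)
          + -(1 / 2) * sechTr (dropOne F g m (cplx w) j) (z - w j)) := by
  rw [← sub_eq_zero]
  revert z
  refine PolyMap.eq_zero_of_real_one ?_ fun t => ?_
  · refine PolyMap.sub ?_ ?_
    · exact ((PolyMap.const _).mul .id).mul
        (PolyMap.ev _ (PolyMap.id.cons (w := fun _ => cplx w) fun _ => .const _))
    refine PolyMap.add (PolyMap.add ?_ ?_) ?_
    · exact .ite fun _ => (PolyMap.const _).mul ((PolyMap.const _).mul (polyMap_convGenus _).sechTr)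
    · exact (PolyMap.const _).mul (.sum fun _ _ => .sum fun _ _ => .ite fun _ =>
        (PolyMap.const _).mul (polyMap_convSplit _ _ _).sechTr)
    · refine .sum fun j _ => ?_
      have h := (polyMap_dropOne (F := F) (g := g) (cplx w) j).sechTr
      exact ((PolyMap.const _).mul (h.comp_one (PolyMap.id.add (.const _)))).add
        ((PolyMap.const _).mul (h.comp_one (PolyMap.id.sub (.const _))))
  · have h := F.recur g m hg hgm (Fin.cons t w)
    have hc : cplx (Fin.cons t w : Fin (m + 1) → ℝ) = Fin.cons (t : ℂ) (cplx w) := by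
      ext i
      refine Fin.cases ?_ (fun i => ?_) i <;> simp [cplx]
    simp only [SWEq, Fin.cons_zero, Fin.tail_cons, Fin.cons_succ, hc] at h
    rw [h, sub_eq_zero]
    congr 1
    · congr 1
      · split_ifs with h2
        · have := integral_integral_Hsu_eq_sechTr (polyMap_genus (F := F) (g := g) (cplx w))
            (fun x y => by
              simp only [F.even_cons_cons (show 1 ≤ g - 1 by omega)]; ring) t
          unfold convGenus
          rw [← this]
          congr! 5
          ring
        · rfl
      · congr 1
        refine Finset.sum_congr rfl fun g₁ _ => Finset.sum_congr rfl fun I _ => ?_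
        split_ifs with h2
        · have := integral_integral_Hsu_eq_sechTr (polyMap_split (F := F) (g := g) (cplx w) g₁ I)
            (fun x y => by
              simp only [F.even_tupIns h2.1, F.even_tupIns h2.2]; ring) t
          unfold convSplit
          rw [← this]
          congr! 4
          ring
        · rfl
    · refine Finset.sum_congr rfl fun j _ => ?_
      have hp := polyMap_dropOne (F := F) (g := g) (cplx w) j
      have hodd : ∀ x, dropOne F g m (cplx w) j (-x) = -dropOne F g m (cplx w) j x := fun x => by
        simp only [dropOne, F.even_tupIns hg]; ring
      rw [← Complex.ofReal_add, ← Complex.ofReal_sub, ← integral_Hsu hp hodd,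
        ← integral_Hsu hp hodd, ← integral_add (hp.integrable_Hsu _).integrableOn
          (hp.integrable_Hsu _).integrableOn]
      congr 1
      ext x
      simp only [dropOne]
      push_cast
      ring

/-- The recursion for real lengths `L₂, …, Lₙ` and complex `L₁ = z`. -/
lemma sstar_real (hg : 1 ≤ g) (hgm : ¬(g = 1 ∧ m = 0)) (w : Fin m → ℝ) (z : ℂ) :
    SStarEq (fun g' n' => ev (F.V g' n')) g m (Fin.cons z (cplx w)) := by
  have hp := sw_sechTr (F := F) hg hgm w (z + 2 * π * Complex.I)
  have hm := sw_sechTr (F := F) hg hgm w (z - 2 * π * Complex.I)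
  have e1 := sechTr_shift (polyMap_convGenus (F := F) (g := g) (cplx w)) z
  have e2 := fun g₁ I => sechTr_shift (polyMap_convSplit (F := F) (g := g) (cplx w) g₁ I) z
  have e3 := fun j => sechTr_shift (polyMap_dropOne (F := F) (g := g) (cplx w) j) (z + w j)
  have e4 := fun j => sechTr_shift (polyMap_dropOne (F := F) (g := g) (cplx w) j) (z - w j)
  have s1 : (if 2 ≤ g then (1 / 2 : ℂ) * (-(1 / 2) *
        sechTr (convGenus F g m (cplx w)) (z + 2 * π * Complex.I)) else 0)
      + (if 2 ≤ g then (1 / 2 : ℂ) * (-(1 / 2) *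
        sechTr (convGenus F g m (cplx w)) (z - 2 * π * Complex.I)) else 0) =
      4 * π * (if 2 ≤ g then -(1 / 2 : ℂ) * convGenus F g m (cplx w) z else 0) := by
    split_ifs
    · linear_combination (-(1 / 4)) * e1
    · simp
  have s2 : (∑ g₁ ∈ Finset.range (g + 1), ∑ I ∈ (Finset.univ : Finset (Fin m)).powerset,
        (if 1 ≤ g₁ ∧ 1 ≤ g - g₁ then -(1 / 2) *
          sechTr (convSplit F g m (cplx w) g₁ I) (z + 2 * π * Complex.I) else 0))
      + (∑ g₁ ∈ Finset.range (g + 1), ∑ I ∈ (Finset.univ : Finset (Fin m)).powerset,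
        (if 1 ≤ g₁ ∧ 1 ≤ g - g₁ then -(1 / 2) *
          sechTr (convSplit F g m (cplx w) g₁ I) (z - 2 * π * Complex.I) else 0)) =
      -(4 * π) * ∑ g₁ ∈ Finset.range (g + 1), ∑ I ∈ (Finset.univ : Finset (Fin m)).powerset,
        (if 1 ≤ g₁ ∧ 1 ≤ g - g₁ then convSplit F g m (cplx w) g₁ I z else 0) := by
    simp_rw [← Finset.sum_add_distrib, Finset.mul_sum]
    refine Finset.sum_congr rfl fun g₁ _ => Finset.sum_congr rfl fun I _ => ?_
    split_ifs
    · linear_combination (-(1 / 2)) * e2 g₁ I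
    · simp
  have s3 : (∑ j : Fin m,
        (-(1 / 2) * sechTr (dropOne F g m (cplx w) j) (z + 2 * π * Complex.I + w j)
          + -(1 / 2) * sechTr (dropOne F g m (cplx w) j) (z + 2 * π * Complex.I - w j)))
      + (∑ j : Fin m,
        (-(1 / 2) * sechTr (dropOne F g m (cplx w) j) (z - 2 * π * Complex.I + w j)
          + -(1 / 2) * sechTr (dropOne F g m (cplx w) j) (z - 2 * π * Complex.I - w j))) =
      -(4 * π) * ∑ j : Fin m, (dropOne F g m (cplx w) j (z + w j)
        + dropOne F g m (cplx w) j (z - w j)) := by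
    rw [← Finset.sum_add_distrib, Finset.mul_sum]
    refine Finset.sum_congr rfl fun j _ => ?_
    have a1 : z + 2 * π * Complex.I + w j = z + w j + 2 * π * Complex.I := by ring
    have a2 : z + 2 * π * Complex.I - w j = z - w j + 2 * π * Complex.I := by ring
    have a3 : z - 2 * π * Complex.I + w j = z + w j - 2 * π * Complex.I := by ring
    have a4 : z - 2 * π * Complex.I - w j = z - w j - 2 * π * Complex.I := by ring
    rw [a1, a2, a3, a4]
    linear_combination (-(1 / 2)) * e3 j + (-(1 / 2)) * e4 j
  have hpi : (4 * π : ℂ) ≠ 0 := by simp [Real.pi_ne_zero]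
  simp only [SStarEq, Fin.cons_zero, Fin.tail_cons, Fin.cons_succ]
  apply mul_left_cancel₀ hpi
  simp only [convGenus, convSplit, dropOne] at s1 s2 s3 hp hm
  simp only [cplx] at s1 s2 s3 hp hm ⊢
  linear_combination hp + hm + s1 + (1 / 2) * s2 + s3

end Recursion

/-! ### Extension to complex lengths -/

section Polynomiality

variable {E : Type*} [NormedAddCommGroup E] [NormedSpace ℂ E] {m : ℕ}
  {x : E → ℂ} {w : E → Fin m → ℂ}

lemma polyMap_shift_term (p : MvPolynomial (Fin (m + 1)) ℝ) (hx : PolyMap x)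
    (hw : ∀ i, PolyMap fun z => w z i) :
    PolyMap fun z => x z * ev p (Fin.cons (x z) (w z)) :=
  hx.mul (PolyMap.ev_cons (x := x) (w := w) p hx hw)

lemma polyMap_genus_term (p : MvPolynomial (Fin (m + 2)) ℝ) (hx : PolyMap x)
    (hw : ∀ i, PolyMap fun z => w z i) :
    PolyMap fun z => pInt (fun t =>
      ev p (Fin.cons t (Fin.cons (x z - t) (w z))) * t * (x z - t)) (x z) := by
  refine polyMap_pInt (f := fun t z =>
    ev p (Fin.cons t (Fin.cons (x z - t) (w z))) * t * (x z - t)) hx ?_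
  have hx' : PolyMap fun q : ℂ × E => x q.2 := hx.comp_snd
  have hw' : ∀ i, PolyMap fun q : ℂ × E => w q.2 i := fun i => (hw i).comp_snd
  have ht : PolyMap fun q : ℂ × E => q.1 * x q.2 := PolyMap.fst.mul hx'
  have hy : PolyMap fun q : ℂ × E => x q.2 - q.1 * x q.2 := hx'.sub ht
  have h1 := PolyMap.ev_cons p ht (w := fun q => Fin.cons (x q.2 - q.1 * x q.2) (w q.2))
    (hy.cons (w := fun q => w q.2) hw')
  exact (h1.mul ht).mul hy

lemma polyMap_split_term (I J : Finset (Fin m)) (p : MvPolynomial (Fin (I.card + 1)) ℝ)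
    (q : MvPolynomial (Fin (J.card + 1)) ℝ) (hx : PolyMap x)
    (hw : ∀ i, PolyMap fun z => w z i) :
    PolyMap fun z => pInt (fun t =>
      ev p (tupIns t (w z) I) * ev q (tupIns (x z - t) (w z) J) * t * (x z - t)) (x z) := by
  refine polyMap_pInt (f := fun t z =>
    ev p (tupIns t (w z) I) * ev q (tupIns (x z - t) (w z) J) * t * (x z - t)) hx ?_
  have hx' : PolyMap fun q : ℂ × E => x q.2 := hx.comp_snd
  have hw' : ∀ i, PolyMap fun q : ℂ × E => w q.2 i := fun i => (hw i).comp_snd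
  have ht : PolyMap fun q : ℂ × E => q.1 * x q.2 := PolyMap.fst.mul hx'
  have hy : PolyMap fun q : ℂ × E => x q.2 - q.1 * x q.2 := hx'.sub ht
  have h1 := PolyMap.ev_tupIns I p ht (w := fun q => w q.2) hw'
  have h2 := PolyMap.ev_tupIns J q hy (w := fun q => w q.2) hw'
  exact ((h1.mul h2).mul ht).mul hy

lemma polyMap_drop_term (I : Finset (Fin m)) (p : MvPolynomial (Fin (I.card + 1)) ℝ) {y : E → ℂ}
    (hy : PolyMap y) (hw : ∀ i, PolyMap fun z => w z i) :
    PolyMap fun z => y z * ev p (tupIns (y z) (w z) I) :=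
  hy.mul (PolyMap.ev_tupIns I p (x := y) (w := w) hy hw)

/-- The difference of the two sides of the recursion is a polynomial function of the lengths. -/
lemma polyMap_sstar (F : SWFamily) (g : ℕ) (hx : PolyMap x) (hw : ∀ i, PolyMap fun z => w z i)
    (c : ℂ) : PolyMap fun z =>
    (x z + c) * ev (F.V g (m + 1)) (Fin.cons (x z + c) (w z)) +
      (x z - c) * ev (F.V g (m + 1)) (Fin.cons (x z - c) (w z)) -
    ((if 2 ≤ g then
      -(1 / 2 : ℂ) * pInt (fun t => ev (F.V (g - 1) (m + 2))
        (Fin.cons t (Fin.cons (x z - t) (w z))) * t * (x z - t)) (x z)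
    else 0)
    - (1 / 2 : ℂ) * ∑ g₁ ∈ Finset.range (g + 1),
        ∑ I ∈ (Finset.univ : Finset (Fin m)).powerset,
        (if 1 ≤ g₁ ∧ 1 ≤ g - g₁ then
          pInt (fun t =>
            ev (F.V g₁ (I.card + 1)) (tupIns t (w z) I) *
            ev (F.V (g - g₁) (Iᶜ.card + 1)) (tupIns (x z - t) (w z) Iᶜ) * t * (x z - t)) (x z)
        else 0)
    - ∑ j : Fin m,
        ((x z + w z j) * ev (F.V g (({j}ᶜ : Finset (Fin m)).card + 1))
            (tupIns (x z + w z j) (w z) ({j}ᶜ : Finset (Fin m)))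
         + (x z - w z j) * ev (F.V g (({j}ᶜ : Finset (Fin m)).card + 1))
            (tupIns (x z - w z j) (w z) ({j}ᶜ : Finset (Fin m))))) := by
  refine PolyMap.sub (PolyMap.add ?_ ?_) (PolyMap.sub (PolyMap.sub (.ite fun _ => ?_) ?_) ?_)
  · exact polyMap_shift_term (x := fun z => x z + c) (w := w) _ (hx.add (.const c)) hw
  · exact polyMap_shift_term (x := fun z => x z - c) (w := w) _ (hx.sub (.const c)) hw
  · exact (PolyMap.const _).mul (polyMap_genus_term (x := x) (w := w) _ hx hw)
  · exact (PolyMap.const _).mul (.sum fun g₁ _ => .sum fun I _ => .ite fun _ =>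
      polyMap_split_term (x := x) (w := w) I Iᶜ _ _ hx hw)
  · exact .sum fun j _ => (polyMap_drop_term (y := fun z => x z + w z j) (w := w) _ _
      (hx.add (hw j)) hw).add (polyMap_drop_term (y := fun z => x z - w z j) (w := w) _ _
      (hx.sub (hw j)) hw)

end Polynomiality

/-- Every Stanford–Witten family satisfies the new super recursion (★★)
at every `(g,n)` with `g ≥ 1`, `n ≥ 1`, `(g,n) ≠ (1,1)`, for all complex boundary lengths. -/
theorem stanford_witten_family_satisfies_new_recursion (F : SWFamily) :
    ∀ g m, 1 ≤ g → ¬(g = 1 ∧ m = 0) → ∀ L : Fin (m + 1) → ℂ,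
      SStarEq (fun g' n' => ev (F.V g' n')) g m L := by
  intro g m hg hgm L
  have h0 : PolyMap fun L : Fin (m + 1) → ℂ => L 0 := .proj 0
  have ht : ∀ i, PolyMap fun L : Fin (m + 1) → ℂ => Fin.tail L i := fun i => .proj i.succ
  have hP := polyMap_sstar (x := fun L : Fin (m + 1) → ℂ => L 0) (w := fun L => Fin.tail L)
    F g h0 ht (2 * (π : ℂ) * Complex.I)
  refine sub_eq_zero.mp (hP.eq_zero_of_real (fun L => ?_) L)
  have h := sstar_real (F := F) hg hgm (Fin.tail L) (L 0 : ℂ)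
  have hc : (Fin.cons (L 0 : ℂ) (cplx (Fin.tail L)) : Fin (m + 1) → ℂ) = cplx L := by
    ext i
    refine Fin.cases ?_ (fun i => ?_) i <;> simp [cplx, Fin.tail]
  rw [hc] at h
  exact sub_eq_zero.mpr h

end
end

section
/- Let (V_{g,n}) be a (★)-family. Then for every (g,n) with 2g−2+n ≥ 2 and all complex L_2,…,L_n: V_{g,n}(2πi, L_2,…,L_n) = Σ_{k=2}^n ∫₀^{L_k} x·V_{g,n−1}(L_2,…,L_{k−1},x,L_{k+1},…,L_n) dx, where x is substituted in the k-th slot of V_{g,n−1}, the integral is the polynomial antiderivative, and the empty sum (case n = 1) is 0. -/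
/-!
Setting `L₁ = 0` in (★) proves the identity. On the left, evenness of `V_{g,n}` in `L₁` turns the
symmetric difference quotient into `V_{g,n}(2πi, L₂, …, Lₙ)`. On the right, the two iterated
integrals run over `[0, L₁]` and hence vanish, while in the last sum the integrals up to
`L_j` and `-L_j` agree because `x V_{g,n-1}(x, …)` is odd in `x` (`pInt_neg_of_odd`). What is left is
to move `x` from the first slot to the slot of `L_j`, which is the symmetry of `V_{g,n-1}`
(`ev_tupIns_compl_singleton`).
-/

open scoped Real Topology
open MeasureTheory Filter

noncomputable section

/-- A (★)-family: real polynomials `V_{g,n}`, symmetric and even in each variable,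
with the correct initial values, satisfying the new recursion (★) at all complex points. -/
structure StarFamily where
  V : (g n : ℕ) → MvPolynomial (Fin n) ℝ
  symm : ∀ g n, StableIdx g n → ∀ (σ : Equiv.Perm (Fin n)) (z : Fin n → ℂ),
    ev (V g n) (z ∘ σ) = ev (V g n) z
  even : ∀ g n, StableIdx g n → ∀ (i : Fin n) (z : Fin n → ℂ),
    ev (V g n) (Function.update z i (-(z i))) = ev (V g n) z
  v03 : ∀ z : Fin 3 → ℂ, ev (V 0 3) z = 1
  v11 : ∀ z : Fin 1 → ℂ, ev (V 1 1) z = (z 0 ^ 2 + 4 * (π : ℂ) ^ 2) / 48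
  star : ∀ g m, 4 ≤ 2 * g + (m + 1) → ∀ L : Fin (m + 1) → ℂ,
    StarEq (fun g' n' => ev (V g' n')) g m L

lemma pInt_zero (f : ℂ → ℂ) : pInt f 0 = 0 := by simp [pInt]

/-- The antiderivative vanishing at `0` of an odd function is even. -/
lemma pInt_neg_of_odd (f : ℂ → ℂ) (hf : ∀ x, f (-x) = -f x) (a : ℂ) :
    pInt f (-a) = pInt f a := by
  simp [pInt, hf, mul_neg]

/-- Symmetry of `V_{g,n}`, along a bijection between index types whose sizes are equal
only propositionally. -/
lemma ev_comp_equiv (F : StarFamily) (g : ℕ) {a b : ℕ} (hb : StableIdx g b)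
    (e : Fin a ≃ Fin b) (w : Fin b → ℂ) :
    ev (F.V g a) (w ∘ e) = ev (F.V g b) w := by
  obtain rfl : a = b := by simpa using Fintype.card_congr e
  exact F.symm g a hb e w

lemma card_compl_singleton_add_one {m : ℕ} (j : Fin m) :
    ({j}ᶜ : Finset (Fin m)).card + 1 = m := by
  have := j.pos
  simp only [Finset.card_compl, Fintype.card_fin, Finset.card_singleton]
  omega

/-- Putting `x` in front of the tuple with its `j`-th entry removed has the same effect as
substituting `x` in the `j`-th slot. -/
lemma ev_tupIns_compl_singleton (F : StarFamily) (g m : ℕ) (hs : StableIdx g m) (t : Fin m → ℂ)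
    (j : Fin m) (x : ℂ) :
    ev (F.V g (({j}ᶜ : Finset (Fin m)).card + 1)) (tupIns x t ({j}ᶜ : Finset (Fin m))) =
      ev (F.V g m) (Function.update t j x) := by
  set I : Finset (Fin m) := {j}ᶜ
  have hne : ∀ i, ((I.orderIsoOfFin rfl) i).1 ≠ j := fun i =>
    Finset.notMem_singleton.1 (Finset.mem_compl.1 ((I.orderIsoOfFin rfl) i).2)
  let φ : Fin (I.card + 1) → Fin m := Fin.cons j fun i => ((I.orderIsoOfFin rfl) i).1
  have hinj : Function.Injective φ := by
    refine Fin.cons_injective_iff.2 ⟨?_, ?_⟩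
    · rintro ⟨i, hi⟩
      exact hne i hi
    · exact Subtype.val_injective.comp (I.orderIsoOfFin rfl).injective
  have hbij : Function.Bijective φ :=
    (Fintype.bijective_iff_injective_and_card φ).2
      ⟨hinj, by simpa using card_compl_singleton_add_one j⟩
  rw [← ev_comp_equiv F g hs (Equiv.ofBijective φ hbij)]
  congr 1
  funext i
  refine Fin.cases ?_ (fun i => ?_) i
  · simp [tupIns, φ]
  · simp only [tupIns, φ, Function.comp_apply, Equiv.ofBijective_apply, Fin.cons_succ,
      Function.update_of_ne (hne i)]

/-- For a (★)-family, the Do–Norbury identity holds: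
`V_{g,n}(2πi, L₂, …, Lₙ) = Σₖ ∫₀^{Lₖ} x V_{g,n-1}(L₂, …, x, …, Lₙ) dx`. -/
theorem do_norbury_identity (F : StarFamily) :
    ∀ g m, 4 ≤ 2 * g + (m + 1) → ∀ t : Fin m → ℂ,
      ev (F.V g (m + 1)) (Fin.cons (2 * (π : ℂ) * Complex.I) t) =
        ∑ k : Fin m, pInt (fun x => x * ev (F.V g m) (Function.update t k x)) (t k) := by
  intro g m h t
  have hs : StableIdx g m := by unfold StableIdx; omega
  have hev : ev (F.V g (m + 1)) (Fin.cons (-(2 * (π : ℂ) * Complex.I)) t) =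
      ev (F.V g (m + 1)) (Fin.cons (2 * (π : ℂ) * Complex.I) t) := by
    have := F.even g (m + 1) (by unfold StableIdx; omega) 0 (Fin.cons (2 * (π : ℂ) * Complex.I) t)
    simpa using this
  have hpi : (π : ℂ) ≠ 0 := by exact_mod_cast Real.pi_ne_zero
  have hodd : ∀ (k : Fin m) (x : ℂ), -x * ev (F.V g m) (Function.update t k (-x)) =
      -(x * ev (F.V g m) (Function.update t k x)) := fun k x => by
    have := F.even g m hs k (Function.update t k x)
    simp only [Function.update_idem, Function.update_self] at this
    rw [this, neg_mul]
  have key := F.star g m h (Fin.cons 0 t)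
  simp only [StarEq, newRHS, Fin.cons_zero, Fin.tail_cons, Fin.cons_succ, pInt_zero, zero_add,
    zero_sub, hev, ite_self, Finset.sum_const_zero, mul_zero,
    ev_tupIns_compl_singleton F g m hs, card_compl_singleton_add_one, if_pos hs] at key
  calc _ = _ := by field_simp; ring
    _ = _ := key
    _ = _ := by
      rw [Finset.mul_sum]
      refine Finset.sum_congr rfl fun k _ => ?_
      simp only [mul_comm (ev _ _)]
      rw [pInt_neg_of_odd _ (hodd k)]
      ring

end
end

section
/- For every real x ≥ 0 and every complex t with Re t ≥ 0: ∫₀^∞ e^{−lt}/(1+e^{(x+l)/2}) dl = −lim_{N→∞} Σ_{k=1}^N (−1)^k·e^{−xk/2}/(t+k/2), where the integral converges absolutely and the limit of partial sums on the right exists. -/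
/-!
Put `q = e^{-(x+l)/2}`, which lies in `(0, 1)` for `l > 0`. Since `1/(1+e^{(x+l)/2}) = q/(1+q)`,
the geometric series gives `1/(1+e^{(x+l)/2}) = -∑_{k≥1} (-q)^k`, and integrating
`e^{-lt} (-q)^k` over `l > 0` produces the `k`-th term `(-1)^k e^{-xk/2}/(t+k/2)`.

The term-by-term integration is dominated convergence applied to the partial sums: these are
`((-q)^N - 1)/(1+e^{(x+l)/2})` (`sum_neg_inv_pow`), hence at most `2 e^{-l/2}` in absolute value
uniformly in `N`. This stays integrable even when `x = 0` and `Re t = 0`, where the series of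
integrals need not converge absolutely.
-/

open scoped Real Topology
open MeasureTheory Filter

noncomputable section

/-- Partial sums of the geometric series with ratio `-1/E`, written over the denominator `1 + E`. -/
lemma sum_neg_inv_pow {E : ℝ} (hE : 0 < E) (N : ℕ) :
    ∑ k ∈ Finset.Icc 1 N, (-E⁻¹) ^ k = ((-E⁻¹) ^ N - 1) / (1 + E) := by
  have h1 : 1 + E ≠ 0 := by positivity
  have h2 : E ≠ 0 := hE.ne'
  induction N with
  | zero => simp
  | succ n ih =>
    rw [Finset.sum_Icc_succ_top (by omega), ih, pow_succ]
    field_simp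
    ring

/-- The integrand whose integral over `l > 0` is the `k`-th term of the series, in the form
`e^{-lt} (-q)^k` with `q = e^{-(x+l)/2}`. -/
lemma term_eq (x l : ℝ) (t : ℂ) (k : ℕ) :
    (-1 : ℂ) ^ k * Complex.exp (-(x : ℂ) * k / 2) * Complex.exp (-(t + k / 2) * l) =
      Complex.exp (-(l : ℂ) * t) * (((-(Real.exp ((x + l) / 2))⁻¹) ^ k : ℝ) : ℂ) := by
  rw [neg_pow (Real.exp ((x + l) / 2))⁻¹, ← Real.exp_neg, ← Real.exp_nat_mul]
  push_cast
  rw [mul_assoc, ← Complex.exp_add, mul_left_comm, ← Complex.exp_add]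
  congr 2
  ring

lemma norm_exp_le_one {l : ℝ} (hl : 0 < l) {t : ℂ} (ht : 0 ≤ t.re) :
    ‖Complex.exp (-(l : ℂ) * t)‖ ≤ 1 := by
  rw [Complex.norm_exp, Real.exp_le_one_iff]
  simpa using mul_nonneg hl.le ht

lemma one_div_le_exp {x l : ℝ} (hx : 0 ≤ x) :
    1 / (1 + Real.exp ((x + l) / 2)) ≤ Real.exp (-(1 / 2) * l) := by
  have h : Real.exp (-(1 / 2) * l) = 1 / Real.exp (l / 2) := by
    rw [one_div (Real.exp _), ← Real.exp_neg]; congr 1; ring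
  rw [h]
  have : Real.exp (l / 2) ≤ Real.exp ((x + l) / 2) := Real.exp_le_exp.2 (by linarith)
  exact one_div_le_one_div_of_le (Real.exp_pos _) (by linarith)

/-- For `x ≥ 0` and `Re t ≥ 0`, the integral
`∫₀^∞ e^{-lt}/(1+e^{(x+l)/2}) dl` converges absolutely and equals
`-Σ_{k≥1} (-1)^k e^{-xk/2}/(t + k/2)` (the partial sums converging to minus the integral). -/
theorem laplace_kernel_expansion_plus (x : ℝ) (hx : 0 ≤ x) (t : ℂ) (ht : 0 ≤ t.re) :
    IntegrableOn
      (fun l : ℝ => Complex.exp (-(l : ℂ) * t) / ((1 + Real.exp ((x + l) / 2) : ℝ) : ℂ))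
      (Set.Ioi 0) ∧
    Tendsto (fun N : ℕ => ∑ k ∈ Finset.Icc 1 N,
        (-1 : ℂ) ^ k * Complex.exp (-(x : ℂ) * k / 2) / (t + k / 2)) atTop
      (𝓝 (-∫ l in Set.Ioi (0 : ℝ),
        Complex.exp (-(l : ℂ) * t) / ((1 + Real.exp ((x + l) / 2) : ℝ) : ℂ))) := by
  have hdom : IntegrableOn (fun l : ℝ => Real.exp (-(1 / 2) * l)) (Set.Ioi 0) :=
    integrableOn_exp_mul_Ioi (by norm_num) 0
  have hne : ∀ l : ℝ, ((1 + Real.exp ((x + l) / 2) : ℝ) : ℂ) ≠ 0 := fun l => by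
    exact_mod_cast (by positivity : (1 + Real.exp ((x + l) / 2) : ℝ) ≠ 0)
  refine ⟨?_, ?_⟩
  · refine Integrable.mono' hdom ?_ ?_
    · refine Continuous.aestronglyMeasurable (Continuous.div ?_ ?_ hne)
      · fun_prop
      · fun_prop
    · filter_upwards [ae_restrict_mem measurableSet_Ioi] with l hl
      rw [norm_div, Complex.norm_real, Real.norm_of_nonneg (by positivity)]
      refine le_trans ?_ (one_div_le_exp hx)
      gcongr
      exact norm_exp_le_one hl ht
  have hneg : ∀ k : ℕ, 1 ≤ k → (-(t + (k : ℂ) / 2)).re < 0 := fun k hk => by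
    have h1 : (1 : ℝ) ≤ k := by exact_mod_cast hk
    have h2 : (-(t + (k : ℂ) / 2)).re = -(t.re + k / 2) := by simp
    rw [h2]; linarith
  have hsum : ∀ N : ℕ, ∑ k ∈ Finset.Icc 1 N,
      (-1 : ℂ) ^ k * Complex.exp (-(x : ℂ) * k / 2) / (t + k / 2) =
      ∫ l in Set.Ioi (0 : ℝ), ∑ k ∈ Finset.Icc 1 N,
        (-1 : ℂ) ^ k * Complex.exp (-(x : ℂ) * k / 2) * Complex.exp (-(t + k / 2) * l) := by
    intro N
    rw [integral_finsetSum]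
    · refine Finset.sum_congr rfl fun k hk => ?_
      rw [integral_const_mul, integral_exp_mul_complex_Ioi (hneg k (Finset.mem_Icc.1 hk).1)]
      rw [Complex.ofReal_zero, mul_zero, Complex.exp_zero, neg_div_neg_eq, mul_one_div]
    · intro k hk
      exact (integrableOn_exp_mul_complex_Ioi (hneg k (Finset.mem_Icc.1 hk).1) 0).const_mul _
  have hpart : ∀ (N : ℕ) (l : ℝ), ∑ k ∈ Finset.Icc 1 N,
      (-1 : ℂ) ^ k * Complex.exp (-(x : ℂ) * k / 2) * Complex.exp (-(t + k / 2) * l) =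
      Complex.exp (-(l : ℂ) * t) * ((((-(Real.exp ((x + l) / 2))⁻¹) ^ N - 1) /
        (1 + Real.exp ((x + l) / 2)) : ℝ) : ℂ) := by
    intro N l
    rw [← sum_neg_inv_pow (Real.exp_pos _), Complex.ofReal_sum, Finset.mul_sum]
    exact Finset.sum_congr rfl fun k _ => term_eq x l t k
  have hq : ∀ l : ℝ, 0 < l → |-(Real.exp ((x + l) / 2))⁻¹| < 1 := fun l hl => by
    rw [abs_neg, abs_of_pos (by positivity)]
    exact inv_lt_one_of_one_lt₀ (Real.one_lt_exp_iff.2 (by linarith))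
  simp_rw [hsum]
  rw [← integral_neg]
  refine tendsto_integral_of_dominated_convergence
    (fun l : ℝ => 2 * Real.exp (-(1 / 2) * l)) ?_ (hdom.const_mul 2) ?_ ?_
  · intro N
    exact Continuous.aestronglyMeasurable (by fun_prop)
  · intro N
    filter_upwards [ae_restrict_mem measurableSet_Ioi] with l hl
    rw [hpart, norm_mul, Complex.norm_real, norm_div, Real.norm_eq_abs, Real.norm_eq_abs,
      abs_of_pos (show 0 < 1 + Real.exp ((x + l) / 2) by positivity)]
    have h1 : |(-(Real.exp ((x + l) / 2))⁻¹) ^ N - 1| ≤ 2 := by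
      refine (abs_sub _ _).trans ?_
      rw [abs_pow, abs_one]
      have := pow_le_one₀ (n := N) (abs_nonneg _) (hq l hl).le
      linarith
    calc _ ≤ 1 * (2 / (1 + Real.exp ((x + l) / 2))) := by
          gcongr
          exact norm_exp_le_one hl ht
      _ = 2 * (1 / (1 + Real.exp ((x + l) / 2))) := by ring
      _ ≤ _ := by gcongr; exact one_div_le_exp hx
  · filter_upwards [ae_restrict_mem measurableSet_Ioi] with l hl
    simp_rw [hpart]
    have h1 : Tendsto (fun N : ℕ => ((-(Real.exp ((x + l) / 2))⁻¹) ^ N - 1) /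
        (1 + Real.exp ((x + l) / 2))) atTop (𝓝 ((0 - 1) / (1 + Real.exp ((x + l) / 2)))) :=
      ((tendsto_pow_atTop_nhds_zero_of_abs_lt_one (hq l hl)).sub_const 1).div_const _
    have h2 := ((Complex.continuous_ofReal.tendsto _).comp h1).const_mul
      (Complex.exp (-(l : ℂ) * t))
    have h3 : -(Complex.exp (-(l : ℂ) * t) / ((1 + Real.exp ((x + l) / 2) : ℝ) : ℂ)) =
        Complex.exp (-(l : ℂ) * t) * (((0 - 1) / (1 + Real.exp ((x + l) / 2)) : ℝ) : ℂ) := by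
      rw [Complex.ofReal_div]
      push_cast
      ring
    rw [h3]
    exact h2

end
end
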